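/- arXiv:1207.5077 — 2 statements merged into one kernel-verified Lean document; each statement's English description precedes it below -/
import Mathlib

section
/- Let J ≥ 1 and 0 ≤ K ≤ J be integers, let τ ≥ 0, and let γ_1,…,γ_J : (0,∞) → ℂ be functions of bounded variation with Var(γ_i,(0,∞)) ≤ τ and lim_{x→∞} γ_i(x) = 0 for each i. Let η, φ_1,…,φ_J be real numbers, set φ = φ_1 + ⋯ + φ_J and Γ(x) = γ_1(x) ⋯ γ_J(x). Let 0 ≤ a < b < ∞ and let θ : [a,b] → ℝ be absolutely continuous. Then | ∫_a^b ( (φ − K η) e^{iK(ηx + 2θ(x))} e^{−iφx} Γ(x) − 2K e^{iK(ηx + 2θ(x))} e^{−iφx} Γ(x) θ'(x) ) dx | ≤ 2 τ^J. -/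
open scoped BigOperators ENNReal
open MeasureTheory

/-!
Up to the unimodular constant `I`, the integrand is `F' * Γ` with `F = exp (I ψ)` and the real,
absolutely continuous phase `ψ x = (K η - φ) x + 2 K θ x`. Formally, integration by parts moves the
derivative to `Γ`: as `|F| = 1`, the integral over `[x, b]` is at most
`|Γ x| + |Γ b| + Var (Γ, [x, b])`.

Let `V x` be the product of the tail variations of the factors, `Var (γ i, [x, ∞))`. Because each
`γ i` vanishes at infinity, both `|Γ x| ≤ V x` and `|Γ x - Γ y| ≤ V x - V y` for `x ≤ y`, and these
two inequalities are stable under products. Hence the bound above telescopes to `2 V x ≤ 2 τ ^ J`,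
and `x → a`. The integration by parts itself is never carried out: the function
`y ↦ ∫_x^y F' Γ - F y Γ y` satisfies the increment bound `(1 + o(1)) (V y - V z)` on short intervals
`[y, z]`, and such bounds add up along a partition.
-/

open Set Filter Topology

section VariationMajorant

variable {α E A ι : Type*}

/-- `V` is a *variation majorant* of `f` on `s`: it dominates the norm of `f`, and its decrements
dominate the increments of `f`. The first condition is the second one for a last point
"at infinity" where both functions vanish; the model is the tail variation
`V x = Var (f, [x, ∞))` of a function vanishing at infinity. -/
structure IsVariationMajorantOn [Preorder α] [NormedAddCommGroup E] (f : α → E) (V : α → ℝ)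
    (s : Set α) : Prop where
  norm_le : ∀ x ∈ s, ‖f x‖ ≤ V x
  norm_sub_le : ∀ x ∈ s, ∀ y ∈ s, x ≤ y → ‖f x - f y‖ ≤ V x - V y

namespace IsVariationMajorantOn

section Preorder

variable [Preorder α] {s t : Set α}

theorem mono [NormedAddCommGroup E] {f : α → E} {V : α → ℝ} (hf : IsVariationMajorantOn f V t)
    (hst : s ⊆ t) : IsVariationMajorantOn f V s :=
  ⟨fun x hx ↦ hf.norm_le x (hst hx), fun x hx y hy ↦ hf.norm_sub_le x (hst hx) y (hst hy)⟩

theorem antitoneOn [NormedAddCommGroup E] {f : α → E} {V : α → ℝ}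
    (hf : IsVariationMajorantOn f V s) : AntitoneOn V s := fun x hx y hy hxy ↦
  sub_nonneg.1 ((norm_nonneg _).trans (hf.norm_sub_le x hx y hy hxy))

theorem one [NormedRing A] [NormOneClass A] :
    IsVariationMajorantOn (1 : α → A) 1 s :=
  ⟨fun _ _ ↦ by simp, fun _ _ _ _ _ ↦ by simp⟩

theorem mul [NormedRing A] {f g : α → A} {V W : α → ℝ} (hf : IsVariationMajorantOn f V s)
    (hg : IsVariationMajorantOn g W s) : IsVariationMajorantOn (f * g) (V * W) s where
  norm_le x hx := (norm_mul_le _ _).trans <|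
    mul_le_mul (hf.norm_le x hx) (hg.norm_le x hx) (norm_nonneg _)
      ((norm_nonneg _).trans (hf.norm_le x hx))
  norm_sub_le x hx y hy hxy := by
    have hV : 0 ≤ V x - V y := (norm_nonneg _).trans (hf.norm_sub_le x hx y hy hxy)
    have hVy : 0 ≤ V y := (norm_nonneg _).trans (hf.norm_le y hy)
    calc ‖f x * g x - f y * g y‖ = ‖(f x - f y) * g x + f y * (g x - g y)‖ := by
          congr 1; noncomm_ring
      _ ≤ ‖f x - f y‖ * ‖g x‖ + ‖f y‖ * ‖g x - g y‖ :=
          (norm_add_le _ _).trans (add_le_add (norm_mul_le _ _) (norm_mul_le _ _))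
      _ ≤ (V x - V y) * W x + V y * (W x - W y) := by
          gcongr
          exacts [hf.norm_sub_le x hx y hy hxy, hg.norm_le x hx, hf.norm_le y hy,
            hg.norm_sub_le x hx y hy hxy]
      _ = V x * W x - V y * W y := by ring

theorem prod [NormedCommRing A] [NormOneClass A] {f : ι → α → A} {V : ι → α → ℝ}
    {I : Finset ι} (hf : ∀ i ∈ I, IsVariationMajorantOn (f i) (V i) s) :
    IsVariationMajorantOn (∏ i ∈ I, f i) (∏ i ∈ I, V i) s := by
  classical
  induction I using Finset.induction_on with
  | empty => exact one
  | insert i I hi ih =>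
    rw [Finset.forall_mem_insert] at hf
    rw [Finset.prod_insert hi, Finset.prod_insert hi]
    exact hf.1.mul (ih hf.2)

end Preorder

theorem continuousWithinAt [LinearOrder α] [TopologicalSpace α] [NormedAddCommGroup E]
    {s : Set α} {f : α → E} {V : α → ℝ} (hf : IsVariationMajorantOn f V s) {x : α} (hx : x ∈ s)
    (hV : ContinuousWithinAt V s x) : ContinuousWithinAt f s x := by
  have hVx : Tendsto (fun y ↦ |V y - V x|) (𝓝[s] x) (𝓝 0) := by
    simpa using (hV.tendsto.sub_const (V x)).abs
  refine tendsto_iff_norm_sub_tendsto_zero.2 <| squeeze_zero' (.of_forall fun _ ↦ norm_nonneg _)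
    (eventually_mem_nhdsWithin.mono fun y hy ↦ ?_) hVx
  rcases le_total x y with hxy | hyx
  · rw [norm_sub_rev, abs_sub_comm]
    exact (hf.norm_sub_le x hx y hy hxy).trans (le_abs_self _)
  · exact (hf.norm_sub_le y hy x hx hyx).trans (le_abs_self _)

theorem aestronglyMeasurable [NormedAddCommGroup E] {μ : Measure ℝ} [NullSingletonClass μ]
    {s : Set ℝ} (hs : MeasurableSet s) {f : ℝ → E} {V : ℝ → ℝ} (hf : IsVariationMajorantOn f V s) :
    AEStronglyMeasurable f (μ.restrict s) := by
  set D : Set ℝ := {x ∈ s | ¬ContinuousWithinAt V s x}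
  have hD : D.Countable := hf.antitoneOn.countable_not_continuousWithinAt
  have hcont : ContinuousOn f (s \ D) := fun x hx ↦
    (hf.continuousWithinAt hx.1 (not_not.1 fun h ↦ hx.2 ⟨hx.1, h⟩)).mono sdiff_subset
  rw [← Measure.restrict_congr_set (sdiff_null_ae_eq_self (hD.measure_zero μ))]
  exact hcont.aestronglyMeasurable (hs.diff hD.measurableSet)

end IsVariationMajorantOn

theorem isVariationMajorantOn_eVariationOn_Ici [LinearOrder α] [NormedAddCommGroup E] {f : α → E}
    {s : Set α} (hs : IsUpperSet s) (hf : BoundedVariationOn f s)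
    (hlim : Tendsto f atTop (𝓝 0)) :
    IsVariationMajorantOn f (fun x ↦ (eVariationOn f (Ici x)).toReal) s where
  norm_le x hx := by
    have : Nonempty α := ⟨x⟩
    have h : Tendsto (fun y ↦ dist (f x) (f y)) atTop (𝓝 ‖f x‖) := by
      simpa using tendsto_const_nhds.dist hlim
    exact le_of_tendsto h <| (eventually_ge_atTop x).mono fun y hy ↦
      (hf.mono (hs.Ici_subset hx)).dist_le self_mem_Ici hy
  norm_sub_le x hx y hy hxy := by
    have hadd : edist (f x) (f y) + eVariationOn f (Ici y) ≤ eVariationOn f (Ici x) := calc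
      _ ≤ eVariationOn f (Icc x y) + eVariationOn f (Ici y) := by
        gcongr
        exact eVariationOn.edist_le f (left_mem_Icc.2 hxy) (right_mem_Icc.2 hxy)
      _ ≤ eVariationOn f (Icc x y ∪ Ici y) :=
        eVariationOn.add_le_union f fun u hu v hv ↦ hu.2.trans hv
      _ = eVariationOn f (Ici x) := by rw [Icc_union_Ici_eq_Ici hxy]
    rw [le_sub_iff_add_le, ← dist_eq_norm, dist_edist,
      ← ENNReal.toReal_add (edist_ne_top _ _) (hf.mono (hs.Ici_subset hy))]
    exact ENNReal.toReal_mono (hf.mono (hs.Ici_subset hx)) hadd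

end VariationMajorant

section IntegralBound

theorem dist_le_mul_sub_of_dist_le_add_abs_mul_sub {X : Type*} [PseudoMetricSpace X] {Φ : ℝ → X}
    {N V : ℝ → ℝ} {a b C : ℝ} (hab : a ≤ b) (hN : ContinuousOn N (Icc a b))
    (hV : AntitoneOn V (Icc a b))
    (hΦ : ∀ x ∈ Icc a b, ∀ y ∈ Icc a b, x ≤ y →
      dist (Φ x) (Φ y) ≤ (C + |N y - N x|) * (V x - V y)) :
    dist (Φ a) (Φ b) ≤ C * (V a - V b) := by
  suffices h : ∀ ε > 0, dist (Φ a) (Φ b) ≤ (C + ε) * (V a - V b) by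
    have hlim : Tendsto (fun ε ↦ (C + ε) * (V a - V b)) (𝓝[>] 0) (𝓝 (C * (V a - V b))) :=
      tendsto_nhdsWithin_of_tendsto_nhds <| Continuous.tendsto' (by fun_prop) _ _ (by simp)
    exact ge_of_tendsto hlim (eventually_mem_nhdsWithin.mono h)
  intro ε hε
  obtain ⟨t, ht0, htmono, ⟨m, htm⟩, htN⟩ := exists_monotone_Icc_subset_open_cover_Icc hab
    (c := fun x ↦ {y | dist (N y) (N x) < ε / 2})
    (fun _ ↦ isOpen_lt (hN.domRestrict.dist continuous_const) continuous_const)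
    (fun x _ ↦ mem_iUnion.2 ⟨x, by simpa using half_pos hε⟩)
  have hstep (n : ℕ) : dist (Φ (t n)) (Φ (t (n + 1))) ≤ (C + ε) * (V (t n) - V (t (n + 1))) := by
    have hle : t n ≤ t (n + 1) := htmono n.le_succ
    have hNε : |N (t (n + 1)) - N (t n)| ≤ ε := by
      obtain ⟨x, hx⟩ := htN n
      have := dist_triangle_right (N (t (n + 1))) (N (t n)) (N x)
      have h₁ : dist (N (t n)) (N x) < ε / 2 := hx (left_mem_Icc.2 hle)
      have h₂ : dist (N (t (n + 1))) (N x) < ε / 2 := hx (right_mem_Icc.2 hle)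
      rw [← Real.dist_eq]
      linarith
    refine (hΦ _ (t n).2 _ (t (n + 1)).2 hle).trans ?_
    gcongr
    exact sub_nonneg.2 (hV (t n).2 (t (n + 1)).2 hle)
  calc dist (Φ a) (Φ b) = dist (Φ (t 0)) (Φ (t m)) := by rw [ht0, htm m le_rfl]
    _ ≤ ∑ n ∈ Finset.range m, (C + ε) * (V (t n) - V (t (n + 1))) :=
      dist_le_range_sum_of_dist_le (f := fun n ↦ Φ (t n)) m fun _ ↦ hstep _
    _ = (C + ε) * (V a - V b) := by
      rw [← Finset.mul_sum, Finset.sum_range_sub' (fun n ↦ V (t n)), ht0, htm m le_rfl]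

namespace IsVariationMajorantOn

variable {R 𝕜 E : Type*} [NormedAddCommGroup E] {μ : Measure ℝ} {Γ : ℝ → E} {V : ℝ → ℝ}
  {a b C M : ℝ}

theorem intervalIntegrable_smul [NormedRing R] [Module R E] [IsBoundedSMul R E]
    [NullSingletonClass μ] {g : ℝ → R} (hΓ : IsVariationMajorantOn Γ V (Ioc a b))
    (hV : ∀ x ∈ Ioc a b, V x ≤ M) (hab : a ≤ b) (hg : IntervalIntegrable g μ a b) :
    IntervalIntegrable (fun x ↦ g x • Γ x) μ a b := by
  rw [intervalIntegrable_iff_integrableOn_Ioc_of_le hab] at hg ⊢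
  refine hg.smul_bdd M (hΓ.aestronglyMeasurable measurableSet_Ioc) ?_
  filter_upwards [ae_restrict_mem measurableSet_Ioc] with x hx
  exact (hΓ.norm_le x hx).trans (hV x hx)

theorem intervalIntegrable_smul_of_Icc [NormedRing R] [Module R E] [IsBoundedSMul R E]
    [NullSingletonClass μ] {g : ℝ → R} (hΓ : IsVariationMajorantOn Γ V (Icc a b))
    (hab : a ≤ b) (hg : IntervalIntegrable g μ a b) :
    IntervalIntegrable (fun x ↦ g x • Γ x) μ a b :=
  (hΓ.mono Ioc_subset_Icc_self).intervalIntegrable_smul (fun _ hx ↦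
    hΓ.antitoneOn (left_mem_Icc.2 hab) (Ioc_subset_Icc_self hx) hx.1.le) hab hg

variable [NormedSpace ℝ E]

theorem norm_integral_smul_sub_const_le [NormedRing R] [Module R E] [IsBoundedSMul R E]
    {g : ℝ → R} (hΓ : IsVariationMajorantOn Γ V (Icc a b)) (hab : a ≤ b)
    (hg : IntervalIntegrable g μ a b) :
    ‖∫ x in a..b, g x • (Γ x - Γ b) ∂μ‖ ≤ (∫ x in a..b, ‖g x‖ ∂μ) * (V a - V b) := by
  have ha := left_mem_Icc.2 hab
  have hb := right_mem_Icc.2 hab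
  rw [← intervalIntegral.integral_mul_const]
  refine intervalIntegral.norm_integral_le_of_norm_le hab (.of_forall fun x hx ↦ ?_)
    (hg.norm.mul_const _)
  have hx' := Ioc_subset_Icc_self hx
  refine (norm_smul_le _ _).trans ?_
  gcongr
  exact (hΓ.norm_sub_le x hx' b hb hx.2).trans
    (sub_le_sub_right (hΓ.antitoneOn ha hx' hx'.1) _)

variable [RCLike 𝕜] [NormedSpace 𝕜 E] [CompleteSpace E] [NullSingletonClass μ] {F g : ℝ → 𝕜}

theorem norm_integral_smul_sub_smul_add_smul_le_add_integral_norm_mul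
    (hΓ : IsVariationMajorantOn Γ V (Icc a b)) (hab : a ≤ b) (hg : IntervalIntegrable g μ a b)
    (hF : ∫ x in a..b, g x ∂μ = F b - F a) (hFC : ‖F a‖ ≤ C) :
    ‖(∫ x in a..b, g x • Γ x ∂μ) - F b • Γ b + F a • Γ a‖ ≤
      (C + ∫ x in a..b, ‖g x‖ ∂μ) * (V a - V b) := by
  have hsplit : (∫ x in a..b, g x • Γ x ∂μ) - F b • Γ b + F a • Γ a =
      F a • (Γ a - Γ b) + ∫ x in a..b, g x • (Γ x - Γ b) ∂μ := by
    simp only [smul_sub]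
    rw [intervalIntegral.integral_sub (hΓ.intervalIntegrable_smul_of_Icc hab hg)
      ⟨hg.1.smul_const _, hg.2.smul_const _⟩, intervalIntegral.integral_smul_const, hF]
    module
  have hΓab : ‖Γ a - Γ b‖ ≤ V a - V b :=
    hΓ.norm_sub_le a (left_mem_Icc.2 hab) b (right_mem_Icc.2 hab) hab
  rw [hsplit, add_mul]
  refine (norm_add_le _ _).trans (add_le_add ?_ (hΓ.norm_integral_smul_sub_const_le hab hg))
  rw [norm_smul]
  exact mul_le_mul hFC hΓab (norm_nonneg _) ((norm_nonneg _).trans hFC)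

theorem norm_integral_smul_sub_smul_add_smul_le (hΓ : IsVariationMajorantOn Γ V (Icc a b))
    (hab : a ≤ b) (hg : IntervalIntegrable g μ a b)
    (hF : ∀ x ∈ Icc a b, ∀ y ∈ Icc a b, ∫ t in x..y, g t ∂μ = F y - F x)
    (hFC : ∀ x ∈ Icc a b, ‖F x‖ ≤ C) :
    ‖(∫ x in a..b, g x • Γ x ∂μ) - F b • Γ b + F a • Γ a‖ ≤ C * (V a - V b) := by
  have ha := left_mem_Icc.2 hab
  have hgΓ := hΓ.intervalIntegrable_smul_of_Icc hab hg
  have hsub {x y : ℝ} (hx : x ∈ Icc a b) (hy : y ∈ Icc a b) : uIcc x y ⊆ uIcc a b :=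
    uIcc_subset_uIcc (Icc_subset_uIcc hx) (Icc_subset_uIcc hy)
  set N : ℝ → ℝ := fun y ↦ ∫ t in a..y, ‖g t‖ ∂μ
  set Φ : ℝ → E := fun y ↦ (∫ t in a..y, g t • Γ t ∂μ) - F y • Γ y with hΦ
  have hN : ContinuousOn N (Icc a b) :=
    uIcc_of_le hab ▸ intervalIntegral.continuousOn_primitive_interval' hg.norm left_mem_uIcc
  have hlocal : ∀ x ∈ Icc a b, ∀ y ∈ Icc a b, x ≤ y →
      dist (Φ x) (Φ y) ≤ (C + |N y - N x|) * (V x - V y) := fun x hx y hy hxy ↦ by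
    have hΦxy : Φ y - Φ x = (∫ t in x..y, g t • Γ t ∂μ) - F y • Γ y + F x • Γ x := by
      rw [← intervalIntegral.integral_interval_sub_left (hgΓ.mono_set (hsub ha hy))
        (hgΓ.mono_set (hsub ha hx))]
      simp only [hΦ]
      abel
    have hNxy : N y - N x = ∫ t in x..y, ‖g t‖ ∂μ :=
      intervalIntegral.integral_interval_sub_left (hg.norm.mono_set (hsub ha hy))
        (hg.norm.mono_set (hsub ha hx))
    have hV : 0 ≤ V x - V y := sub_nonneg.2 (hΓ.antitoneOn hx hy hxy)
    rw [dist_comm, dist_eq_norm, hΦxy]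
    refine ((hΓ.mono (Icc_subset_Icc hx.1 hy.2)
      ).norm_integral_smul_sub_smul_add_smul_le_add_integral_norm_mul hxy
        (hg.mono_set (hsub hx hy)) (hF x hx y hy) (hFC x hx)).trans ?_
    rw [← hNxy]
    gcongr
    exact le_abs_self _
  have hΦab := dist_le_mul_sub_of_dist_le_add_abs_mul_sub hab hN hΓ.antitoneOn hlocal
  rw [dist_comm, dist_eq_norm] at hΦab
  simpa [hΦ] using hΦab

theorem norm_integral_smul_le_of_Icc (hΓ : IsVariationMajorantOn Γ V (Icc a b)) (hab : a ≤ b)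
    (hg : IntervalIntegrable g μ a b)
    (hF : ∀ x ∈ Icc a b, ∀ y ∈ Icc a b, ∫ t in x..y, g t ∂μ = F y - F x)
    (hFC : ∀ x ∈ Icc a b, ‖F x‖ ≤ C) :
    ‖∫ x in a..b, g x • Γ x ∂μ‖ ≤ 2 * C * V a := by
  have hbdry : ∀ x ∈ Icc a b, ‖F x • Γ x‖ ≤ C * V x := fun x hx ↦ by
    rw [norm_smul]
    exact mul_le_mul (hFC x hx) (hΓ.norm_le x hx) (norm_nonneg _)
      ((norm_nonneg _).trans (hFC x hx))
  calc ‖∫ x in a..b, g x • Γ x ∂μ‖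
      = ‖((∫ x in a..b, g x • Γ x ∂μ) - F b • Γ b + F a • Γ a) + F b • Γ b - F a • Γ a‖ := by
        congr 1; abel
    _ ≤ C * (V a - V b) + C * V b + C * V a :=
        (_root_.norm_sub_le _ _).trans <| add_le_add ((norm_add_le _ _).trans <| add_le_add
          (hΓ.norm_integral_smul_sub_smul_add_smul_le hab hg hF hFC)
          (hbdry b (right_mem_Icc.2 hab))) (hbdry a (left_mem_Icc.2 hab))
    _ = 2 * C * V a := by ring

theorem norm_integral_smul_le (hΓ : IsVariationMajorantOn Γ V (Ioc a b))
    (hV : ∀ x ∈ Ioc a b, V x ≤ M) (hab : a < b) (hg : IntervalIntegrable g μ a b)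
    (hF : ∀ x ∈ Icc a b, ∀ y ∈ Icc a b, ∫ t in x..y, g t ∂μ = F y - F x)
    (hFC : ∀ x ∈ Icc a b, ‖F x‖ ≤ C) :
    ‖∫ x in a..b, g x • Γ x ∂μ‖ ≤ 2 * C * M := by
  have hC : 0 ≤ C := (norm_nonneg _).trans (hFC a (left_mem_Icc.2 hab.le))
  have hgΓ := hΓ.intervalIntegrable_smul hV hab.le hg
  have hlim : Tendsto (fun x ↦ ∫ t in x..b, g t • Γ t ∂μ) (𝓝[>] a)
      (𝓝 (∫ t in a..b, g t • Γ t ∂μ)) := by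
    have hcont := intervalIntegral.continuousOn_primitive_interval_left
      ((intervalIntegrable_iff' enorm_ne_top).1 hgΓ) a left_mem_uIcc
    rw [uIcc_of_le hab.le] at hcont
    exact hcont.tendsto.mono_left (nhdsWithin_le_of_mem (Icc_mem_nhdsGT hab))
  refine le_of_tendsto hlim.norm ?_
  filter_upwards [Ioc_mem_nhdsGT hab] with x hx
  have hsub : Icc x b ⊆ Icc a b := Icc_subset_Icc_left hx.1.le
  calc ‖∫ t in x..b, g t • Γ t ∂μ‖ ≤ 2 * C * V x :=
        (hΓ.mono fun y hy ↦ ⟨hx.1.trans_le hy.1, hy.2⟩).norm_integral_smul_le_of_Icc hx.2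
          (hg.mono_set (by rwa [uIcc_of_le hx.2, uIcc_of_le hab.le]))
          (fun y hy z hz ↦ hF y (hsub hy) z (hsub hz)) fun y hy ↦ hFC y (hsub hy)
    _ ≤ 2 * C * M := by gcongr; exact hV x hx

end IsVariationMajorantOn

end IntegralBound

section AbsolutelyContinuous

theorem absolutelyContinuousOnInterval_comp_of_lipschitzWith {X Y : Type*} [PseudoMetricSpace X]
    [PseudoMetricSpace Y] {C : NNReal} {f : X → Y} (hf : LipschitzWith C f) {u : ℝ → X} {a b : ℝ}
    (hu : AbsolutelyContinuousOnInterval u a b) :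
    AbsolutelyContinuousOnInterval (fun x ↦ f (u x)) a b := by
  refine squeeze_zero (fun _ ↦ Finset.sum_nonneg fun _ _ ↦ dist_nonneg) (fun _ ↦ ?_)
    (by simpa using Tendsto.const_mul (C : ℝ) hu)
  rw [Finset.mul_sum]
  exact Finset.sum_le_sum fun _ _ ↦ hf.dist_le_mul _ _

theorem integral_eq_sub_of_absolutelyContinuousOnInterval {E : Type*} [NormedAddCommGroup E]
    [NormedSpace ℝ E] [CompleteSpace E] {f f' : ℝ → E} {a b : ℝ}
    (hf : AbsolutelyContinuousOnInterval f a b)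
    (hderiv : ∀ᵐ x, x ∈ uIcc a b → HasDerivAt f (f' x) x)
    (hint : IntervalIntegrable f' volume a b) : ∫ x in a..b, f' x = f b - f a := by
  -- Mathlib has the real-valued case; continuous linear functionals reduce to it.
  refine (SeparatingDual.eq_iff_forall_dual_eq (R := ℝ)).2 fun L ↦ ?_
  have hLf := absolutelyContinuousOnInterval_comp_of_lipschitzWith L.lipschitz hf
  rw [← L.intervalIntegral_comp_comm hint, map_sub, ← hLf.integral_deriv_eq_sub]
  refine intervalIntegral.integral_congr_ae ?_
  filter_upwards [hderiv] with x hx hxab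
  exact (L.hasFDerivAt.comp_hasDerivAt x (hx (uIoc_subset_uIcc hxab))).deriv.symm

theorem lipschitzWith_cexp_ofReal_mul_I :
    LipschitzWith 1 fun r : ℝ ↦ Complex.exp (r * Complex.I) := by
  have hderiv (r : ℝ) : HasDerivAt (fun r : ℝ ↦ Complex.exp (r * Complex.I))
      (Complex.exp (r * Complex.I) * (1 * Complex.I)) r :=
    ((hasDerivAt_id r).ofReal_comp.mul_const Complex.I).cexp
  refine lipschitzWith_of_nnnorm_deriv_le (fun r ↦ (hderiv r).differentiableAt) fun r ↦ ?_
  rw [(hderiv r).deriv]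
  simp

variable {ψ ψ' : ℝ → ℝ} {a b : ℝ}

theorem intervalIntegrable_mul_I_mul_cexp (hψ' : IntervalIntegrable ψ' volume a b)
    (hψ : ∀ x ∈ uIcc a b, ψ x = ψ a + ∫ t in a..x, ψ' t) :
    IntervalIntegrable (fun t ↦ ψ' t * Complex.I * Complex.exp (ψ t * Complex.I)) volume a b := by
  have hcont : ContinuousOn ψ (uIcc a b) :=
    (continuousOn_const.add (intervalIntegral.continuousOn_primitive_interval' hψ'
      left_mem_uIcc)).congr hψ
  have hofReal : IntervalIntegrable (fun t ↦ (ψ' t : ℂ)) volume a b := ⟨hψ'.1.ofReal, hψ'.2.ofReal⟩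
  exact (hofReal.mul_const _).mul_continuousOn (by fun_prop)

theorem integral_mul_I_mul_cexp (hψ' : IntervalIntegrable ψ' volume a b)
    (hψ : ∀ x ∈ uIcc a b, ψ x = ψ a + ∫ t in a..x, ψ' t) {x y : ℝ} (hx : x ∈ uIcc a b)
    (hy : y ∈ uIcc a b) :
    ∫ t in x..y, ψ' t * Complex.I * Complex.exp (ψ t * Complex.I) =
      Complex.exp (ψ y * Complex.I) - Complex.exp (ψ x * Complex.I) := by
  have hsub : uIcc x y ⊆ uIcc a b := uIcc_subset_uIcc hx hy
  set u : ℝ → ℝ := fun t ↦ ψ a + ∫ s in a..t, ψ' s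
  have hψu : ∀ t ∈ uIcc a b, ψ t = u t := hψ
  have hAC : AbsolutelyContinuousOnInterval (fun t ↦ Complex.exp (u t * Complex.I)) a b :=
    absolutelyContinuousOnInterval_comp_of_lipschitzWith
      (lipschitzWith_cexp_ofReal_mul_I.comp (isometry_add_left (ψ a)).lipschitz)
      (hψ'.absolutelyContinuousOnInterval_intervalIntegral left_mem_uIcc)
  rw [hψu x hx, hψu y hy]
  refine integral_eq_sub_of_absolutelyContinuousOnInterval (hAC.mono hsub) ?_
    ((intervalIntegrable_mul_I_mul_cexp hψ' hψ).mono_set hsub)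
  filter_upwards [hψ'.ae_hasDerivAt_integral] with t ht htxy
  have hu : HasDerivAt u (ψ' t) t := (ht (hsub htxy) a left_mem_uIcc).const_add (ψ a)
  rw [hψu t (hsub htxy), mul_comm]
  exact (hu.ofReal_comp.mul_const Complex.I).cexp

end AbsolutelyContinuous

theorem norm_integral_mul_I_mul_cexp_mul_prod_le {ι : Type*} [Fintype ι] {γ : ι → ℝ → ℂ}
    {τ : ι → ℝ} {a b : ℝ} (hab : a < b) (hτ : ∀ i, 0 ≤ τ i)
    (hvar : ∀ i, eVariationOn (γ i) (Ioi a) ≤ ENNReal.ofReal (τ i))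
    (hlim : ∀ i, Tendsto (γ i) atTop (𝓝 0)) {ψ ψ' : ℝ → ℝ}
    (hψ' : IntervalIntegrable ψ' volume a b)
    (hψ : ∀ x ∈ Icc a b, ψ x = ψ a + ∫ t in a..x, ψ' t) :
    ‖∫ x in a..b, ψ' x * Complex.I * Complex.exp (ψ x * Complex.I) * ∏ i, γ i x‖ ≤
      2 * ∏ i, τ i := by
  rw [← uIcc_of_le hab.le] at hψ
  have hmajorant : IsVariationMajorantOn (∏ i, γ i)
      (∏ i, fun x ↦ (eVariationOn (γ i) (Ici x)).toReal) (Ioi a) := .prod fun i _ ↦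
    isVariationMajorantOn_eVariationOn_Ici (isUpperSet_Ioi a)
      (ne_top_of_le_ne_top ENNReal.ofReal_ne_top (hvar i)) (hlim i)
  have hbound : ∀ x ∈ Ioc a b,
      (∏ i, fun x ↦ (eVariationOn (γ i) (Ici x)).toReal) x ≤ ∏ i, τ i := fun x hx ↦ by
    rw [Finset.prod_apply]
    exact Finset.prod_le_prod (fun _ _ ↦ ENNReal.toReal_nonneg) fun i _ ↦
      ENNReal.toReal_le_of_le_ofReal (hτ i)
        ((eVariationOn.mono _ (Ici_subset_Ioi.2 hx.1)).trans (hvar i))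
  simpa [Finset.prod_apply] using (hmajorant.mono Ioc_subset_Ioi_self).norm_integral_smul_le
    (C := 1) hbound hab (intervalIntegrable_mul_I_mul_cexp hψ' hψ)
    (fun x hx y hy ↦ integral_mul_I_mul_cexp hψ' hψ (Icc_subset_uIcc hx) (Icc_subset_uIcc hy))
    fun x _ ↦ (Complex.norm_exp_ofReal_mul_I _).le

theorem stmt4_general {ι : Type*} [Fintype ι] {γ : ι → ℝ → ℂ} {τ : ι → ℝ} {a b : ℝ} (hab : a < b)
    (hτ : ∀ i, 0 ≤ τ i) (hvar : ∀ i, eVariationOn (γ i) (Ioi a) ≤ ENNReal.ofReal (τ i))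
    (hlim : ∀ i, Tendsto (γ i) atTop (𝓝 0)) (κ η φ : ℝ) {θ θ' : ℝ → ℝ}
    (hθ' : IntervalIntegrable θ' volume a b)
    (hθ : ∀ x ∈ Icc a b, θ x = θ a + ∫ t in a..x, θ' t) :
    ‖∫ x in a..b,
        (((φ - κ * η : ℝ) : ℂ) * Complex.exp (Complex.I * κ * (η * x + 2 * θ x)) *
            Complex.exp (-Complex.I * φ * x) * (∏ i, γ i x)
          - 2 * κ * Complex.exp (Complex.I * κ * (η * x + 2 * θ x)) *
            Complex.exp (-Complex.I * φ * x) * (∏ i, γ i x) * θ' x)‖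
      ≤ 2 * ∏ i, τ i := by
  set ψ : ℝ → ℝ := fun x ↦ (κ * η - φ) * x + 2 * κ * θ x
  set ψ' : ℝ → ℝ := fun x ↦ κ * η - φ + 2 * κ * θ' x
  have hψ' : IntervalIntegrable ψ' volume a b := intervalIntegrable_const.add (hθ'.const_mul _)
  have hψ : ∀ x ∈ Icc a b, ψ x = ψ a + ∫ t in a..x, ψ' t := fun x hx ↦ by
    have hθ'x : IntervalIntegrable θ' volume a x :=
      hθ'.mono_set (uIcc_subset_uIcc_left (Icc_subset_uIcc hx))
    simp only [ψ, ψ']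
    rw [hθ x hx, intervalIntegral.integral_add intervalIntegrable_const (hθ'x.const_mul _),
      intervalIntegral.integral_const, intervalIntegral.integral_const_mul, smul_eq_mul]
    ring
  have hexp (x : ℝ) : Complex.exp (Complex.I * κ * (η * x + 2 * θ x)) *
      Complex.exp (-Complex.I * φ * x) = Complex.exp (ψ x * Complex.I) := by
    rw [← Complex.exp_add]
    push_cast [ψ]
    ring_nf
  calc _ = ‖Complex.I *
        ∫ x in a..b, ψ' x * Complex.I * Complex.exp (ψ x * Complex.I) * ∏ i, γ i x‖ := by
        rw [← intervalIntegral.integral_const_mul]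
        congr 1
        refine intervalIntegral.integral_congr fun x _ ↦ ?_
        simp only [← hexp, ψ']
        push_cast
        linear_combination -(κ * η - φ + 2 * κ * θ' x) *
          (Complex.exp (Complex.I * κ * (η * x + 2 * θ x)) * Complex.exp (-Complex.I * φ * x)) *
          (∏ i, γ i x) * Complex.I_sq
    _ ≤ 2 * ∏ i, τ i := by
        rw [norm_mul, Complex.norm_I, one_mul]
        exact norm_integral_mul_I_mul_cexp_mul_prod_le hab hτ hvar hlim hψ' hψ

theorem stmt4 (J K : ℕ) (hJ : 1 ≤ J) (hK : K ≤ J) (τ : ℝ) (hτ : 0 ≤ τ)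
    (γ : Fin J → ℝ → ℂ)
    (hvar : ∀ i, eVariationOn (γ i) (Set.Ioi 0) ≤ ENNReal.ofReal τ)
    (hlim : ∀ i, Filter.Tendsto (γ i) Filter.atTop (nhds 0))
    (η : ℝ) (φ : Fin J → ℝ)
    (a b : ℝ) (ha : 0 ≤ a) (hab : a < b)
    (θ θ' : ℝ → ℝ)
    (hθ'int : IntervalIntegrable θ' volume a b)
    (hθAC : ∀ x ∈ Set.Icc a b, θ x = θ a + ∫ t in a..x, θ' t) :
    ‖∫ x in a..b,
        (((((∑ i, φ i) - K * η : ℝ)) : ℂ) *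
            Complex.exp (Complex.I * K * (η * x + 2 * θ x)) *
            Complex.exp (-Complex.I * (∑ i, φ i) * x) * (∏ i, γ i x)
          - 2 * K * Complex.exp (Complex.I * K * (η * x + 2 * θ x)) *
            Complex.exp (-Complex.I * (∑ i, φ i) * x) * (∏ i, γ i x) * θ' x)‖
      ≤ 2 * τ ^ J := by
  simpa using stmt4_general hab (fun _ ↦ hτ) (fun i ↦ (eVariationOn.mono _
    (Ioi_subset_Ioi ha)).trans (hvar i)) hlim K η (∑ i, φ i) hθ'int hθAC
end

section
/- Let p ≥ 2 be an integer, η > 0, (c_k)_{k≥1} complex numbers and (φ_k)_{k≥1} real numbers. Assume: Σ_{k=1}^∞ |c_k| < ∞; for every j = 1,…,p−1, Σ_{k_1,…,k_j=1}^∞ |c_{k_1} ⋯ c_{k_j} h_j(η; φ_{k_1},…,φ_{k_j})| < ∞; Kη ≠ ε_1 φ_{k_1} + ⋯ + ε_J φ_{k_J} for all integers 1 ≤ K ≤ J ≤ p, all indices k_1,…,k_J ≥ 1 and all signs ε_i ∈ {+1,−1}; and there is an involution k ↦ k* of the index set with c_{k*} = conj(c_k) and φ_{k*} = −φ_k. Then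 E_{J,K} := Σ_{m_1,…,m_J=1}^∞ |c_{m_1} ⋯ c_{m_J} g_{J,K}(η; φ_{m_1},…,φ_{m_J})| is finite whenever 1 ≤ K ≤ J ≤ p−1, and 𝓔_{J,0} := Σ_{m_1,…,m_J=1}^∞ |c_{m_1} ⋯ c_{m_J} 𝒢_{J,0}(η; φ_{m_1},…,φ_{m_J})| is finite whenever 2 ≤ J ≤ p. -/
open scoped BigOperators ENNReal
open MeasureTheory

/-- The functions `h_J` of `1+J` real variables (extra variables beyond the first `J`
are ignored), defined recursively by `h_0(η) = 1` and
`h_J(η;φ_1,…,φ_J) = (η - φ_1 - ⋯ - φ_J)⁻¹ Σ_{j=0}^{J-1} h_j(η;φ_1,…,φ_j) h_{J-j-1}(η;φ_{j+1},…,φ_{J-1})`. -/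
noncomputable def hFun : ℕ → ℝ → (ℕ → ℝ) → ℝ
  | 0, _, _ => 1
  | (J+1), η, φ =>
      (η - ∑ i ∈ Finset.range (J+1), φ i)⁻¹ *
        ∑ j ∈ (Finset.range (J+1)).attach,
          hFun j.1 η φ * hFun (J - j.1) η (fun i => φ (i + j.1))
  termination_by J _ _ => J
  decreasing_by
  · exact Nat.lt_of_lt_of_le (Finset.mem_range.mp j.2) (Nat.le_refl _)
  · exact Nat.lt_succ_of_le (Nat.sub_le J j.1)

/-- Pad a tuple `m : Fin J → ℕ` of indices into a function `ℕ → ℝ` listing `φ_{m_1},…,φ_{m_J}`. -/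
noncomputable def padFin (J : ℕ) (φ : ℕ → ℝ) (m : Fin J → ℕ) : ℕ → ℝ :=
  fun n => if h : n < J then φ (m ⟨n, h⟩) else 0

/-- ω_a coefficients: ω_0 = -1, ω_{±1} = 1/2, otherwise 0. -/
noncomputable def omegaCoef : ℤ → ℝ := fun a =>
  if a = 0 then -1 else if a = 1 ∨ a = -1 then (1 : ℝ) / 2 else 0

/-- The functions `f_{J,K}` of `1+J` real variables (extra variables beyond the first `J`
are ignored); `f_{J,K} = 0` unless `1 ≤ J` and `0 ≤ K ≤ J`. For `J ≥ 2`,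
`f_{J,K}(η;φ) = η⁻¹ Σ_{a=-1}^{1} ω_a (1/J!) Σ_{σ ∈ S_J} g_{J-1,K+a}(η;φ_{σ(1)},…,φ_{σ(J-1)})`,
where `g_{J,K}(η;φ) = -2K (Kη - φ_1 - ⋯ - φ_J)⁻¹ f_{J,K}(η;φ)` is inlined. -/
noncomputable def fAux : ℕ → ℤ → ℝ → (ℕ → ℝ) → ℝ
  | 0, _, _, _ => 0
  | 1, K, η, _ => if K = 0 then -η⁻¹ else if K = 1 then η⁻¹ else 0
  | (J+2), K, η, φ =>
      if 0 ≤ K ∧ K ≤ (J : ℤ) + 2 then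
        η⁻¹ * ∑ a ∈ ({-1, 0, 1} : Finset ℤ), omegaCoef a *
          ((Nat.factorial (J+2) : ℝ)⁻¹ *
            ∑ σ : Equiv.Perm (Fin (J+2)),
              (fun ψ : ℕ → ℝ =>
                (-2 * ((K + a : ℤ) : ℝ)) /
                    (((K + a : ℤ) : ℝ) * η - ∑ i ∈ Finset.range (J+1), ψ i) *
                  fAux (J+1) (K+a) η ψ)
              (fun i => if h : i < J+2 then φ (σ ⟨i, h⟩) else φ i))
      else 0

/-- The functions `g_{J,K} = -2K (Kη - φ_1 - ⋯ - φ_J)⁻¹ f_{J,K}`. -/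
noncomputable def gAux (J : ℕ) (K : ℤ) (η : ℝ) (φ : ℕ → ℝ) : ℝ :=
  (-2 * (K : ℝ)) / ((K : ℝ) * η - ∑ i ∈ Finset.range J, φ i) * fAux J K η φ

/-- Symmetric product `p ⊙ q` of a function of `1+I` variables and one of `1+J` variables. -/
noncomputable def symProd (I J : ℕ) (p q : ℝ → (ℕ → ℝ) → ℝ) (η : ℝ) (φ : ℕ → ℝ) : ℝ :=
  (Nat.factorial (I + J) : ℝ)⁻¹ *
    ∑ σ : Equiv.Perm (Fin (I + J)),
      p η (fun i => if h : i < I + J then φ (σ ⟨i, h⟩) else φ i) *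
      q η (fun i => if h : i + I < I + J then φ (σ ⟨i + I, h⟩) else φ (i + I))

/-- `𝒢_{J,0} = Σ_{j=1}^{J-1} Σ_{k=1}^{min(j,J-j)} (1/(4k)) g_{j,k} ⊙ ğ_{J-j,k}`, where
`ğ_{J,K}(η;φ_1,…,φ_J) = g_{J,K}(η;-φ_1,…,-φ_J)`. -/
noncomputable def GFun (J : ℕ) (η : ℝ) (φ : ℕ → ℝ) : ℝ :=
  ∑ j ∈ Finset.Icc 1 (J - 1), ∑ k ∈ Finset.Icc 1 (min j (J - j)),
    (1 / (4 * (k : ℝ))) *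
      symProd j (J - j) (fun η' ψ => gAux j (k : ℤ) η' ψ)
        (fun η' ψ => gAux (J - j) (k : ℤ) η' (fun i => -ψ i)) η φ

/-!
Since all sums are symmetric in the indices, the variables may be taken to commute: a function `F`
of `J` phases is encoded by the power series `∑_m F(φ_{m_1}, …, φ_{m_J}) X_{m_1} ⋯ X_{m_J}`.
Under this encoding multiplication by `φ_1 + ⋯ + φ_J` is the derivation `D = ∑ φ_k X_k ∂/∂X_k`,
and the recursion for `h_J` says that `H = ∑_{J ≥ 1} h_J` solves the Riccati equation
`(η - D) H = (1 + H)² ℓ`, where `ℓ = ∑ X_k`. By the Leibniz rule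
`(K η - D) H^K = K H^(K-1) (1 + H)² ℓ = K (H^(K-1) + 2 H^K + H^(K+1)) ℓ`,
which is, up to normalization, the recursion for `g_{J,K}`. Hence `η^J g_{J,K}` is encoded by the
part of degree `J` of `2 (-1)^K H^K`.

The power series that converge absolutely at `X_k = |c_k|` form an algebra. It contains `H` by
assumption, hence every `g_{J,K}`. The words with a given content contribute equal terms to the
series of a symmetric function, so nothing cancels and absolute convergence of the commutative
series gives back the sum over all words. Finally `𝒢_{J,0}` is encoded by a combination of products
of the series of `g_{j,k}` and `ğ_{J-j,k}`, and the involution on the indices exchanges `ğ` with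
`g`.
-/

/-- The content of a word: the exponent vector of the monomial `X_{m_1} ⋯ X_{m_J}`. -/
noncomputable def content {σ : Type*} {J : ℕ} (m : Fin J → σ) : σ →₀ ℕ :=
  ∑ i, Finsupp.single (m i) 1

section Words

variable {σ : Type*} {I J : ℕ}

lemma content_append (a : Fin I → σ) (b : Fin J → σ) :
    content (Fin.append a b) = content a + content b := by
  simp [content, Fin.sum_univ_add]

lemma content_comp_perm (m : Fin J → σ) (τ : Equiv.Perm (Fin J)) :
    content (m ∘ τ) = content m :=
  Equiv.sum_comp τ fun i => Finsupp.single (m i) 1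

lemma degree_content (m : Fin J → σ) : (content m).degree = J := by
  simp [content]

lemma weight_content {M : Type*} [AddCommMonoid M] (x : σ → M) (m : Fin J → σ) :
    Finsupp.weight x (content m) = ∑ i, x (m i) := by
  simp [content, Finsupp.weight_single]

lemma prod_content_pow {M : Type*} [CommMonoid M] (r : σ → M) (m : Fin J → σ) :
    (content m).prod (fun k e => r k ^ e) = ∏ i, r (m i) := by
  classical
  rw [content, ← Finsupp.prod_finsetSum_index (by simp) fun _ _ _ => pow_add _ _ _]
  simp

lemma exists_content_eq (n : σ →₀ ℕ) : ∃ m : Fin n.degree → σ, content m = n := by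
  suffices ∃ (J : ℕ) (m : Fin J → σ), content m = n by
    obtain ⟨J, m, rfl⟩ := this
    rw [degree_content]
    exact ⟨m, rfl⟩
  induction n using Finsupp.induction_linear with
  | zero => exact ⟨0, Fin.elim0, by simp [content]⟩
  | add f g hf hg =>
    obtain ⟨I, a, rfl⟩ := hf
    obtain ⟨J, b, rfl⟩ := hg
    exact ⟨I + J, Fin.append a b, content_append a b⟩
  | single k e => exact ⟨e, fun _ => k, by simp [content]⟩

lemma content_apply [DecidableEq σ] (m : Fin J → σ) (k : σ) :
    content m k = Fintype.card {i // m i = k} := by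
  simp [content, Finsupp.finsetSum_apply, Finsupp.single_apply, Fintype.card_subtype]

lemma exists_perm_of_content_eq {m w : Fin J → σ} (h : content w = content m) :
    ∃ τ : Equiv.Perm (Fin J), w = m ∘ τ := by
  classical
  have e (k : σ) : {i // w i = k} ≃ {i // m i = k} :=
    Fintype.equivOfCardEq (by
      rw [← content_apply w k, h, content_apply m k])
  exact ⟨Equiv.ofFiberEquiv e, funext fun i => (Equiv.ofFiberEquiv_map e i).symm⟩

lemma finite_setOf_content_eq (J : ℕ) (n : σ →₀ ℕ) : {m : Fin J → σ | content m = n}.Finite := by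
  refine (Set.Finite.pi' fun _ : Fin J => n.support.finite_toSet).subset ?_
  rintro m rfl i
  classical
  rw [Finset.mem_coe, Finsupp.mem_support_iff, content_apply]
  exact (Fintype.card_pos_iff.mpr ⟨i, rfl⟩).ne'

/-- The finitely many words of length `J` with content `n`. -/
noncomputable def wordsOfContent (J : ℕ) (n : σ →₀ ℕ) : Finset (Fin J → σ) :=
  (finite_setOf_content_eq J n).toFinset

@[simp]
lemma mem_wordsOfContent {n : σ →₀ ℕ} {m : Fin J → σ} :
    m ∈ wordsOfContent J n ↔ content m = n := by
  simp [wordsOfContent]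

lemma summable_iff_summable_sum_wordsOfContent {u : (Fin J → σ) → ℝ} (hu : ∀ m, 0 ≤ u m) :
    Summable u ↔ Summable fun n => ∑ m ∈ wordsOfContent J n, u m := by
  have (n : σ →₀ ℕ) : Finite {m : Fin J → σ // content m = n} := finite_setOf_content_eq J n
  have tsum_fiber (n : σ →₀ ℕ) :
      ∑' m : {m : Fin J → σ // content m = n}, u m = ∑ m ∈ wordsOfContent J n, u m := by
    have := Fintype.ofFinite {m : Fin J → σ // content m = n}
    rw [tsum_fintype, ← Finset.sum_subtype _ (fun _ => mem_wordsOfContent) u]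
  calc Summable u ↔ Summable (u ∘ Equiv.sigmaFiberEquiv content) :=
        (Equiv.summable_iff _).symm
    _ ↔ _ := summable_sigma_of_nonneg (f := u ∘ Equiv.sigmaFiberEquiv content) fun _ => hu _
    _ ↔ _ := and_iff_right fun n => Summable.of_finite
    _ ↔ _ := iff_of_eq <| congrArg Summable <| funext tsum_fiber

end Words

/-- The homogeneous power series `∑_m u(m) X_{m_1} ⋯ X_{m_J}`, summed over all words `m` of
length `J`: the image of the noncommutative series `u` in commuting variables. -/
noncomputable def wordForm {σ R : Type*} [CommSemiring R] {J : ℕ} :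
    ((Fin J → σ) → R) →ₗ[R] MvPowerSeries σ R where
  toFun u n := ∑ m ∈ wordsOfContent J n, u m
  map_add' _ _ := funext fun _ => Finset.sum_add_distrib
  map_smul' _ _ := funext fun _ => (Finset.mul_sum _ _ _).symm

section WordForm

open MvPowerSeries

variable {σ R : Type*} [CommSemiring R] {I J : ℕ}

lemma coeff_wordForm (u : (Fin J → σ) → R) (n : σ →₀ ℕ) :
    coeff n (wordForm u) = ∑ m ∈ wordsOfContent J n, u m := rfl

lemma coeff_wordForm_of_degree_ne (u : (Fin J → σ) → R) {n : σ →₀ ℕ} (hn : n.degree ≠ J) :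
    coeff n (wordForm u) = 0 :=
  Finset.sum_eq_zero fun m hm =>
    absurd (mem_wordsOfContent.mp hm ▸ degree_content m) hn

lemma wordForm_mul (u : (Fin I → σ) → R) (v : (Fin J → σ) → R) :
    wordForm u * wordForm v =
      wordForm fun m : Fin (I + J) → σ => u (m ∘ Fin.castAdd J) * v (m ∘ Fin.natAdd I) := by
  classical
  ext n
  have content_split (m : Fin (I + J) → σ) :
      content (m ∘ Fin.castAdd J) + content (m ∘ Fin.natAdd I) = content m := by
    simp [content, Fin.sum_univ_add]
  have append_castAdd (a : Fin I → σ) (b : Fin J → σ) : Fin.append a b ∘ Fin.castAdd J = a :=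
    funext <| Fin.append_left a b
  have append_natAdd (a : Fin I → σ) (b : Fin J → σ) : Fin.append a b ∘ Fin.natAdd I = b :=
    funext <| Fin.append_right a b
  rw [coeff_mul, coeff_wordForm, ← Finset.sum_fiberwise_of_maps_to
    (g := fun m => (content (m ∘ Fin.castAdd J), content (m ∘ Fin.natAdd I)))
    (t := Finset.HasAntidiagonal.antidiagonal n)
    fun m hm => by simpa [content_split] using hm]
  refine Finset.sum_congr rfl fun p hp => ?_
  rw [Finset.HasAntidiagonal.mem_antidiagonal] at hp
  rw [coeff_wordForm, coeff_wordForm, Finset.sum_mul_sum, ← Finset.sum_product']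
  refine Finset.sum_equiv (Fin.appendEquiv I J) (fun ab => ?_) fun ab _ => ?_
  · simp only [Finset.mem_product, Finset.mem_filter, mem_wordsOfContent, Fin.appendEquiv,
      Equiv.coe_fn_mk, append_castAdd, append_natAdd, content_append, Prod.ext_iff]
    exact ⟨fun h => ⟨by rw [h.1, h.2, hp], h⟩, And.right⟩
  · simp only [Fin.appendEquiv, Equiv.coe_fn_mk, append_castAdd, append_natAdd]

lemma wordForm_comp_perm (u : (Fin J → σ) → R) (τ : Equiv.Perm (Fin J)) :
    wordForm (fun m => u (m ∘ τ)) = wordForm u := by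
  ext n
  rw [coeff_wordForm, coeff_wordForm]
  exact Finset.sum_equiv (Equiv.arrowCongr τ.symm (Equiv.refl σ))
    (fun m => by
      rw [mem_wordsOfContent, mem_wordsOfContent]
      exact iff_of_eq (congrArg (· = n) (content_comp_perm m τ).symm))
    fun _ _ => rfl

/-- The derivation multiplying `X^n` by the weight `∑ n_k x_k`, that is `∑ x_k X_k ∂/∂X_k`. -/
noncomputable def eulerDerivation (x : σ → R) :
    Derivation R (MvPowerSeries σ R) (MvPowerSeries σ R) where
  toFun f n := Finsupp.weight x n * coeff n f
  map_add' f g := funext fun n => by rw [map_add, mul_add]; rfl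
  map_smul' a f := funext fun n => mul_left_comm _ _ _
  map_one_eq_zero' := by
    classical
    ext n
    change Finsupp.weight x n * coeff n 1 = 0
    rcases eq_or_ne n 0 with rfl | hn
    · rw [map_zero, zero_mul]
    · rw [coeff_one, if_neg hn, mul_zero]
  leibniz' f g := by
    classical
    ext n
    change Finsupp.weight x n * coeff n (f * g) = coeff n (f * _ + g * _)
    rw [mul_comm g, map_add, coeff_mul, coeff_mul, coeff_mul, Finset.mul_sum,
      ← Finset.sum_add_distrib]
    refine Finset.sum_congr rfl fun p hp => ?_
    rw [← Finset.HasAntidiagonal.mem_antidiagonal.mp hp, map_add]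
    change _ = coeff p.1 f * (Finsupp.weight x p.2 * coeff p.2 g) +
      Finsupp.weight x p.1 * coeff p.1 f * coeff p.2 g
    ring

lemma coeff_eulerDerivation (x : σ → R) (f : MvPowerSeries σ R) (n : σ →₀ ℕ) :
    coeff n (eulerDerivation x f) = Finsupp.weight x n * coeff n f := rfl

lemma sub_weight_mul_coeff_wordForm {R : Type*} [CommRing R] (a : R) (x : σ → R)
    (u : (Fin J → σ) → R) (n : σ →₀ ℕ) :
    (a - Finsupp.weight x n) * coeff n (wordForm u) =
      coeff n (wordForm fun m => (a - ∑ i, x (m i)) * u m) := by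
  rw [coeff_wordForm, coeff_wordForm, Finset.mul_sum]
  refine Finset.sum_congr rfl fun m hm => ?_
  rw [← mem_wordsOfContent.mp hm, weight_content]

lemma wordForm_fin_zero (u : (Fin 0 → σ) → R) : wordForm u = C (u Fin.elim0) := by
  classical
  ext n
  rw [coeff_C]
  split_ifs with hn
  · rw [hn, coeff_wordForm, Finset.sum_subset (Finset.subset_univ _) fun m _ hm =>
      absurd (mem_wordsOfContent.mpr rfl) hm, Fintype.sum_unique]
    exact congrArg u (Subsingleton.elim _ _)
  · exact coeff_wordForm_of_degree_ne u ((Finsupp.degree_eq_zero_iff n).not.mpr hn)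

/-- The sum `∑_k X_k` of all letters. -/
noncomputable def letterSum (σ R : Type*) [CommSemiring R] : MvPowerSeries σ R :=
  wordForm fun _ : Fin 1 → σ => 1

lemma coeff_mul_letterSum_congr {f g : MvPowerSeries σ R} {n : σ →₀ ℕ}
    (h : ∀ m : σ →₀ ℕ, m.degree + 1 = n.degree → coeff m f = coeff m g) :
    coeff n (f * letterSum σ R) = coeff n (g * letterSum σ R) := by
  classical
  rw [coeff_mul, coeff_mul]
  refine Finset.sum_congr rfl fun p hp => ?_
  rw [Finset.HasAntidiagonal.mem_antidiagonal] at hp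
  by_cases hp₂ : p.2.degree = 1
  · rw [h p.1 (by rw [← hp, map_add, hp₂])]
  · rw [letterSum, coeff_wordForm_of_degree_ne _ hp₂, mul_zero, mul_zero]

end WordForm

section PowerSeries

open MvPowerSeries

variable {σ R : Type*}

lemma coeff_mul_congr_right [CommSemiring R] (e : MvPowerSeries σ R) {f g : MvPowerSeries σ R}
    {n : σ →₀ ℕ} (h : ∀ m ≤ n, coeff m f = coeff m g) : coeff n (e * f) = coeff n (e * g) := by
  classical
  rw [coeff_mul, coeff_mul]
  refine Finset.sum_congr rfl fun p hp => ?_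
  rw [h p.2 (Finset.HasAntidiagonal.mem_antidiagonal.mp hp ▸ le_add_self)]

lemma sub_weight_mul_coeff_pow [CommRing R] {x : σ → R} {a : R} {f g : MvPowerSeries σ R}
    {n : σ →₀ ℕ} (h : ∀ m ≤ n, (a - Finsupp.weight x m) * coeff m f = coeff m g) (k : ℕ) :
    ((k + 1 : ℕ) * a - Finsupp.weight x n) * coeff n (f ^ (k + 1)) =
      (k + 1 : ℕ) * coeff n (f ^ k * g) := by
  have leibniz : ((k + 1 : ℕ) * a) • f ^ (k + 1) - eulerDerivation x (f ^ (k + 1)) =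
      ((k + 1 : ℕ) : R) • (f ^ k * (a • f - eulerDerivation x f)) := by
    rw [Derivation.leibniz_pow, Nat.add_sub_cancel, Nat.cast_smul_eq_nsmul, smul_eq_mul,
      mul_sub, smul_sub, mul_smul_comm, ← pow_succ, mul_smul, Nat.cast_smul_eq_nsmul]
  have coeff_leibniz := congrArg (coeff n) leibniz
  rw [map_sub, coeff_smul, coeff_eulerDerivation, ← sub_mul, coeff_smul] at coeff_leibniz
  rw [coeff_leibniz]
  congr 1
  refine coeff_mul_congr_right _ fun m hm => ?_
  rw [map_sub, coeff_smul, coeff_eulerDerivation, ← sub_mul, h m hm]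

lemma coeff_sum_of_homogeneous [Semiring R] {A : ℕ → MvPowerSeries σ R}
    (hA : ∀ j (n : σ →₀ ℕ), n.degree ≠ j → coeff n (A j) = 0) (s : Finset ℕ) (n : σ →₀ ℕ) :
    coeff n (∑ j ∈ s, A j) = if n.degree ∈ s then coeff n (A n.degree) else 0 := by
  rw [map_sum, ← Finset.sum_ite_eq s n.degree fun j => coeff n (A j)]
  exact Finset.sum_congr rfl fun j _ => by
    split_ifs with h
    · rfl
    · exact hA j n h

lemma coeff_sum_range_sq [CommSemiring R] {A : ℕ → MvPowerSeries σ R}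
    (hA : ∀ j (n : σ →₀ ℕ), n.degree ≠ j → coeff n (A j) = 0) {L : ℕ} {n : σ →₀ ℕ}
    (hn : n.degree ≤ L) :
    coeff n ((∑ j ∈ Finset.range (L + 1), A j) ^ 2) =
      coeff n (∑ j ∈ Finset.range (n.degree + 1), A j * A (n.degree - j)) := by
  classical
  rw [sq, coeff_mul, map_sum]
  simp only [coeff_mul]
  rw [Finset.sum_comm]
  refine Finset.sum_congr rfl fun p hp => ?_
  have degree_add : p.1.degree + p.2.degree = n.degree := by
    rw [← map_add, Finset.HasAntidiagonal.mem_antidiagonal.mp hp]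
  rw [coeff_sum_of_homogeneous hA, coeff_sum_of_homogeneous hA,
    if_pos (Finset.mem_range.mpr (by lia)), if_pos (Finset.mem_range.mpr (by lia)),
    Finset.sum_eq_single_of_mem p.1.degree (Finset.mem_range.mpr (by lia)) fun j _ hj => by
      rw [hA j p.1 hj.symm, zero_mul], ← degree_add, Nat.add_sub_cancel_left]

lemma summable_norm_coeff_mul [NormedCommRing R] {f g : MvPowerSeries σ R}
    (hf : Summable fun n => ‖coeff n f‖) (hg : Summable fun n => ‖coeff n g‖) :
    Summable fun n => ‖coeff n (f * g)‖ := by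
  classical
  have summable_prod := hf.mul_of_nonneg hg (fun _ => norm_nonneg _) fun _ => norm_nonneg _
  have summable_sum := summable_sum_mul_antidiagonal_of_summable_mul
    (f := fun n => ‖coeff n f‖) (g := fun n => ‖coeff n g‖) summable_prod
  refine summable_sum.of_nonneg_of_le (fun _ => norm_nonneg _) fun n => ?_
  rw [coeff_mul]
  exact (norm_sum_le _ _).trans (Finset.sum_le_sum fun _ _ => norm_mul_le _ _)

end PowerSeries

/-- The power series `∑ a_n X^n` for which `∑ a_n r^n` converges absolutely. -/
noncomputable def absSummable {σ R : Type*} [NormedCommRing R] (r : σ → R) :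
    Subalgebra R (MvPowerSeries σ R) where
  carrier := {f | Summable fun n => ‖MvPowerSeries.coeff n (MvPowerSeries.rescale r f)‖}
  mul_mem' {f g} hf hg := by
    rw [Set.mem_ofPred_eq, map_mul]
    exact summable_norm_coeff_mul hf hg
  add_mem' {f g} hf hg := by
    refine .of_nonneg_of_le (fun _ => norm_nonneg _) (fun n => ?_) (Summable.add hf hg)
    rw [map_add, map_add]
    exact norm_add_le _ _
  algebraMap_mem' a := by
    classical
    refine summable_of_ne_finset_zero (s := {0}) fun n hn => ?_
    rw [Finset.mem_singleton] at hn
    rw [MvPowerSeries.coeff_rescale, MvPowerSeries.algebraMap_apply, MvPowerSeries.coeff_C,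
      if_neg hn, mul_zero, norm_zero]

section AbsSummable

open MvPowerSeries

variable {σ : Type*} {J : ℕ}

lemma mem_absSummable {R : Type*} [NormedCommRing R] {r : σ → R} {f : MvPowerSeries σ R} :
    f ∈ absSummable r ↔ Summable fun n => ‖coeff n (rescale r f)‖ :=
  Iff.rfl

lemma mem_absSummable_of_coeff_eq {R : Type*} [NormedCommRing R] {r : σ → R}
    {f g : MvPowerSeries σ R} (hg : g ∈ absSummable r)
    (h : ∀ n, coeff n f ≠ 0 → coeff n f = coeff n g) : f ∈ absSummable r := by
  refine .of_nonneg_of_le (fun _ => norm_nonneg _) (fun n => ?_) hg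
  by_cases hn : coeff n f = 0
  · rw [coeff_rescale, hn, mul_zero, norm_zero]
    exact norm_nonneg _
  · rw [coeff_rescale, coeff_rescale, h n hn]

lemma rescale_wordForm {R : Type*} [CommSemiring R] (r : σ → R) (u : (Fin J → σ) → R) :
    rescale r (wordForm u) = wordForm fun m => (∏ i, r (m i)) * u m := by
  ext n
  rw [coeff_rescale, coeff_wordForm, coeff_wordForm, Finset.mul_sum]
  refine Finset.sum_congr rfl fun m hm => ?_
  rw [← mem_wordsOfContent.mp hm, prod_content_pow]

lemma wordForm_mem_absSummable {R : Type*} [NormedCommRing R] {r : σ → R} {u : (Fin J → σ) → R}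
    (hu : Summable fun m => ‖(∏ i, r (m i)) * u m‖) : wordForm u ∈ absSummable r := by
  rw [mem_absSummable, rescale_wordForm]
  exact .of_nonneg_of_le (fun _ => norm_nonneg _) (fun n => norm_sum_le _ _)
    ((summable_iff_summable_sum_wordsOfContent fun _ => norm_nonneg _).mp hu)

/-- Words with the same content are rearrangements of each other, so there is no cancellation
within the coefficients of a symmetric `u`. -/
lemma summable_of_wordForm_mem_absSummable {R : Type*} [NormedCommRing R] [NormedSpace ℝ R]
    {r : σ → R} {u : (Fin J → σ) → R}
    (hu : ∀ (τ : Equiv.Perm (Fin J)) (m : Fin J → σ), u (m ∘ τ) = u m)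
    (h : wordForm u ∈ absSummable r) : Summable fun m => ‖(∏ i, r (m i)) * u m‖ := by
  set v : (Fin J → σ) → R := fun m => (∏ i, r (m i)) * u m
  have v_comp_perm (τ : Equiv.Perm (Fin J)) (m : Fin J → σ) : v (m ∘ τ) = v m :=
    congrArg₂ _ (Equiv.prod_comp τ fun i => r (m i)) (hu τ m)
  rw [mem_absSummable, rescale_wordForm] at h
  rw [summable_iff_summable_sum_wordsOfContent fun _ => norm_nonneg _]
  refine h.congr fun n => ?_
  rw [coeff_wordForm]
  rcases (wordsOfContent J n).eq_empty_or_nonempty with hn | ⟨w, hw⟩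
  · rw [hn, Finset.sum_empty, Finset.sum_empty, norm_zero]
  have v_eq (m) (hm : m ∈ wordsOfContent J n) : v m = v w := by
    obtain ⟨τ, rfl⟩ := exists_perm_of_content_eq
      ((mem_wordsOfContent.mp hm).trans (mem_wordsOfContent.mp hw).symm)
    exact v_comp_perm τ w
  rw [Finset.sum_congr rfl v_eq, Finset.sum_congr rfl fun m hm => congrArg norm (v_eq m hm),
    Finset.sum_const, Finset.sum_const, ← Nat.cast_smul_eq_nsmul ℝ, norm_smul, Real.norm_natCast,
    nsmul_eq_mul]

end AbsSummable

/-- The action of a permutation of the first `J` of the variables `ψ 0, ψ 1, …`. -/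
def permute (J : ℕ) (τ : Equiv.Perm (Fin J)) (ψ : ℕ → ℝ) : ℕ → ℝ :=
  fun i => if h : i < J then ψ (τ ⟨i, h⟩) else ψ i

/-- The average of a function over the permutations of its first `J` variables. -/
noncomputable def symmetrize (J : ℕ) (F : (ℕ → ℝ) → ℝ) (ψ : ℕ → ℝ) : ℝ :=
  (J.factorial : ℝ)⁻¹ * ∑ τ, F (permute J τ ψ)

/-- The functions invariant under all permutations of their first `J` variables. -/
def symmetricFunctions (J : ℕ) : Submodule ℝ ((ℕ → ℝ) → ℝ) where
  carrier := {F | ∀ τ ψ, F (permute J τ ψ) = F ψ}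
  add_mem' hF hG τ ψ := congrArg₂ (· + ·) (hF τ ψ) (hG τ ψ)
  zero_mem' _ _ := rfl
  smul_mem' a _ hF τ ψ := congrArg (a * ·) (hF τ ψ)

/-- The product of a function of the first `I` variables and a function of the following ones,
that is the product `p ⊙ q` before symmetrization. -/
def concatMul (I : ℕ) (F G : (ℕ → ℝ) → ℝ) (ψ : ℕ → ℝ) : ℝ :=
  F ψ * G fun i => ψ (i + I)

/-- The homogeneous power series `∑_m F(φ_{m_1}, …, φ_{m_J}) X_{m_1} ⋯ X_{m_J}`. -/
noncomputable def phaseForm (φ : ℕ → ℝ) (J : ℕ) : ((ℕ → ℝ) → ℝ) →ₗ[ℝ] MvPowerSeries ℕ ℝ :=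
  wordForm ∘ₗ LinearMap.funLeft ℝ ℝ (padFin J φ)

section Symmetrization

variable {J : ℕ}

lemma permute_permute (τ υ : Equiv.Perm (Fin J)) (ψ : ℕ → ℝ) :
    permute J υ (permute J τ ψ) = permute J (τ * υ) ψ := by
  ext i
  by_cases h : i < J <;> simp [permute, h]

lemma sum_range_permute (τ : Equiv.Perm (Fin J)) (ψ : ℕ → ℝ) :
    ∑ i ∈ Finset.range J, permute J τ ψ i = ∑ i ∈ Finset.range J, ψ i := by
  rw [← Fin.sum_univ_eq_sum_range, ← Fin.sum_univ_eq_sum_range]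
  simpa [permute] using Equiv.sum_comp τ fun i => ψ i

lemma symmetrize_mem_symmetricFunctions (J : ℕ) (F : (ℕ → ℝ) → ℝ) :
    symmetrize J F ∈ symmetricFunctions J := fun τ ψ => by
  simp only [symmetrize, permute_permute]
  exact congrArg _ (Equiv.sum_comp (Equiv.mulLeft τ) fun υ => F (permute J υ ψ))

lemma dependsOn_symmetrize {F : (ℕ → ℝ) → ℝ} (hF : DependsOn F (Set.Iio J)) :
    DependsOn (symmetrize J F) (Set.Iio J) := fun ψ ψ' h => by
  refine congrArg ((J.factorial : ℝ)⁻¹ * ·) (Finset.sum_congr rfl fun τ _ => hF fun i hi => ?_)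
  simp only [permute, dif_pos (Set.mem_Iio.mp hi), h _ (Fin.is_lt _)]

lemma dependsOn_concatMul {I : ℕ} {F G : (ℕ → ℝ) → ℝ} (hF : DependsOn F (Set.Iio I))
    (hG : DependsOn G (Set.Iio J)) : DependsOn (concatMul I F G) (Set.Iio (I + J)) :=
  fun ψ ψ' h => congrArg₂ (· * ·)
    (hF fun i hi => h i (Set.mem_Iio.mpr (Nat.lt_add_right J hi)))
    (hG fun i hi => h (i + I) (by rw [Set.mem_Iio] at hi ⊢; lia))

end Symmetrization

section PhaseForm

open MvPowerSeries

variable {I J : ℕ} {F G : (ℕ → ℝ) → ℝ} (φ : ℕ → ℝ)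

lemma permute_padFin (τ : Equiv.Perm (Fin J)) (m : Fin J → ℕ) :
    permute J τ (padFin J φ m) = padFin J φ (m ∘ τ) := by
  ext i
  by_cases h : i < J <;> simp [permute, padFin, h]

lemma sum_range_padFin (m : Fin J → ℕ) :
    ∑ i ∈ Finset.range J, padFin J φ m i = ∑ i, φ (m i) := by
  rw [← Fin.sum_univ_eq_sum_range]
  simp [padFin]

lemma padFin_comp_castAdd (m : Fin (I + J) → ℕ) {i : ℕ} (hi : i < I) :
    padFin I φ (m ∘ Fin.castAdd J) i = padFin (I + J) φ m i := by
  simp only [padFin, dif_pos hi, dif_pos (Nat.lt_add_right J hi)]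
  rfl

lemma padFin_comp_natAdd (m : Fin (I + J) → ℕ) :
    padFin J φ (m ∘ Fin.natAdd I) = fun i => padFin (I + J) φ m (i + I) := by
  ext i
  by_cases h : i < J <;> simp [padFin, h, add_comm i I]

lemma coeff_phaseForm_of_degree_ne (F : (ℕ → ℝ) → ℝ) {n : ℕ →₀ ℕ} (hn : n.degree ≠ J) :
    coeff n (phaseForm φ J F) = 0 :=
  coeff_wordForm_of_degree_ne _ hn

lemma phaseForm_congr (h : ∀ m, F (padFin J φ m) = G (padFin J φ m)) :
    phaseForm φ J F = phaseForm φ J G :=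
  congrArg wordForm (funext h)

lemma phaseForm_zero_one : phaseForm φ 0 (fun _ => 1) = 1 :=
  wordForm_fin_zero _

lemma phaseForm_symmetrize (F : (ℕ → ℝ) → ℝ) :
    phaseForm φ J (symmetrize J F) = phaseForm φ J F := by
  have symmetrize_eq : symmetrize J F =
      (J.factorial : ℝ)⁻¹ • ∑ τ : Equiv.Perm (Fin J), fun ψ => F (permute J τ ψ) := by
    ext ψ
    simp [symmetrize]
  have phaseForm_permute (τ : Equiv.Perm (Fin J)) :
      phaseForm φ J (fun ψ => F (permute J τ ψ)) = phaseForm φ J F :=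
    (congrArg wordForm <| funext fun m => congrArg F (permute_padFin φ τ m)).trans
      (wordForm_comp_perm (F ∘ padFin J φ) τ)
  rw [symmetrize_eq, map_smul, map_sum, Finset.sum_congr rfl fun τ _ => phaseForm_permute τ,
    Finset.sum_const, Finset.card_univ, Fintype.card_perm, Fintype.card_fin,
    ← Nat.cast_smul_eq_nsmul ℝ, smul_smul, inv_mul_cancel₀ (by positivity), one_smul]

lemma phaseForm_concatMul (hF : DependsOn F (Set.Iio I)) (G : (ℕ → ℝ) → ℝ) :
    phaseForm φ (I + J) (concatMul I F G) = phaseForm φ I F * phaseForm φ J G := by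
  refine (congrArg wordForm <| funext fun m => ?_).trans (wordForm_mul _ _).symm
  simp only [LinearMap.funLeft_apply, concatMul, padFin_comp_natAdd]
  rw [hF fun i hi => padFin_comp_castAdd φ m (Set.mem_Iio.mp hi)]

lemma phaseForm_succ (hF : DependsOn F (Set.Iio J)) :
    phaseForm φ (J + 1) F = phaseForm φ J F * letterSum ℕ ℝ :=
  calc phaseForm φ (J + 1) F = phaseForm φ (J + 1) (concatMul J F fun _ => 1) :=
        phaseForm_congr φ fun _ => (mul_one _).symm
    _ = _ := phaseForm_concatMul φ hF _

lemma sub_weight_mul_coeff_phaseForm (a : ℝ) (F : (ℕ → ℝ) → ℝ) (n : ℕ →₀ ℕ) :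
    (a - Finsupp.weight φ n) * coeff n (phaseForm φ J F) =
      coeff n (phaseForm φ J fun ψ => (a - ∑ i ∈ Finset.range J, ψ i) * F ψ) := by
  refine (sub_weight_mul_coeff_wordForm a φ _ n).trans ?_
  simp only [← sum_range_padFin]
  rfl

end PhaseForm

section Functions

variable (η : ℝ)

lemma hFun_succ (J : ℕ) (ψ : ℕ → ℝ) :
    hFun (J + 1) η ψ = (η - ∑ i ∈ Finset.range (J + 1), ψ i)⁻¹ *
      ∑ j ∈ Finset.range (J + 1), concatMul j (hFun j η) (hFun (J - j) η) ψ := by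
  rw [hFun, Finset.sum_attach (Finset.range (J + 1)) fun j =>
    hFun j η ψ * hFun (J - j) η fun i => ψ (i + j)]
  rfl

lemma fAux_add_two (J : ℕ) (K : ℤ) :
    fAux (J + 2) K η = if 0 ≤ K ∧ K ≤ (J : ℤ) + 2 then
      η⁻¹ • ∑ a ∈ ({-1, 0, 1} : Finset ℤ),
        omegaCoef a • symmetrize (J + 2) (gAux (J + 1) (K + a) η) else 0 := by
  ext ψ
  rw [fAux]
  split_ifs
  · rw [Pi.smul_apply, Finset.sum_apply]
    rfl
  · rfl

lemma fAux_eq_zero_of_lt {J : ℕ} {K : ℤ} (h : (J : ℤ) < K) : fAux J K η = 0 := by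
  match J with
  | 0 => ext; rw [fAux, Pi.zero_apply]
  | 1 =>
    ext
    rw [fAux, if_neg (by lia), if_neg (by lia), Pi.zero_apply]
  | J + 2 => rw [fAux_add_two, if_neg (by lia)]

lemma gAux_eq_zero_of_lt {J : ℕ} {K : ℤ} (h : (J : ℤ) < K) : gAux J K η = 0 := by
  ext ψ
  simp only [gAux, fAux_eq_zero_of_lt η h, Pi.zero_apply, mul_zero]

lemma gAux_zero_right (J : ℕ) : gAux J 0 η = 0 := by
  ext ψ
  simp [gAux]

lemma dependsOn_hFun (J : ℕ) : DependsOn (hFun J η) (Set.Iio J) := by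
  induction J using Nat.strong_induction_on with
  | _ J ih =>
    intro ψ ψ' h
    rcases J with _ | J
    · rw [hFun, hFun]
    rw [hFun_succ, hFun_succ, Finset.sum_congr rfl fun i hi => h i (Finset.mem_range.mp hi)]
    refine congrArg _ (Finset.sum_congr rfl fun j hj => ?_)
    rw [Finset.mem_range] at hj
    exact dependsOn_concatMul (ih j hj) (ih (J - j) (by lia)) fun i hi => h i (by
      rw [Set.mem_Iio] at hi ⊢
      lia)

lemma dependsOn_gAux_of_fAux {J : ℕ} {K : ℤ} (h : DependsOn (fAux J K η) (Set.Iio J)) :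
    DependsOn (gAux J K η) (Set.Iio J) := fun ψ ψ' hψ => by
  rw [gAux, gAux, h hψ, Finset.sum_congr rfl fun i hi => hψ i (Finset.mem_range.mp hi)]

lemma dependsOn_fAux (J : ℕ) (K : ℤ) : DependsOn (fAux J K η) (Set.Iio J) := by
  induction J using Nat.twoStepInduction generalizing K with
  | zero => intro ψ ψ' _; rw [fAux, fAux]
  | one => intro ψ ψ' _; rw [fAux, fAux]
  | more J _ ih =>
    intro ψ ψ' h
    rw [fAux_add_two]
    split_ifs
    · simp only [Pi.smul_apply, Finset.sum_apply]
      refine congrArg _ (Finset.sum_congr rfl fun a _ => congrArg _ ?_)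
      exact dependsOn_symmetrize ((dependsOn_gAux_of_fAux η (ih _)).mono
        (Set.Iio_subset_Iio (Nat.le_succ _))) h
    · rfl

lemma dependsOn_gAux (J : ℕ) (K : ℤ) : DependsOn (gAux J K η) (Set.Iio J) :=
  dependsOn_gAux_of_fAux η (dependsOn_fAux η J K)

lemma fAux_mem_symmetricFunctions (J : ℕ) (K : ℤ) : fAux J K η ∈ symmetricFunctions J := by
  match J with
  | 0 => intro τ ψ; rw [fAux, fAux]
  | 1 => intro τ ψ; rw [fAux, fAux]
  | J + 2 =>
    rw [fAux_add_two]
    split_ifs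
    · exact Submodule.smul_mem _ _ <| Submodule.sum_mem _ fun a _ =>
        Submodule.smul_mem _ _ <| symmetrize_mem_symmetricFunctions _ _
    · exact Submodule.zero_mem _

lemma gAux_mem_symmetricFunctions (J : ℕ) (K : ℤ) : gAux J K η ∈ symmetricFunctions J :=
  fun τ ψ => by
    rw [gAux, gAux, sum_range_permute, fAux_mem_symmetricFunctions η J K τ ψ]

lemma GFun_eq_sum_symmetrize (J : ℕ) :
    GFun J η = ∑ j ∈ Finset.Icc 1 (J - 1), ∑ k ∈ Finset.Icc 1 (min j (J - j)),
      (1 / (4 * (k : ℝ))) •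
        symmetrize J (concatMul j (gAux j k η) fun ψ => gAux (J - j) k η (-ψ)) := by
  ext ψ
  simp only [GFun, Finset.sum_apply, Pi.smul_apply]
  refine Finset.sum_congr rfl fun j hj => Finset.sum_congr rfl fun k _ => ?_
  rw [Finset.mem_Icc] at hj
  nth_rw 3 [← Nat.add_sub_of_le (show j ≤ J by lia)]
  rfl

lemma GFun_mem_symmetricFunctions (J : ℕ) : GFun J η ∈ symmetricFunctions J := by
  rw [GFun_eq_sum_symmetrize]
  exact Submodule.sum_mem _ fun j _ => Submodule.sum_mem _ fun k _ =>
    Submodule.smul_mem _ _ <| symmetrize_mem_symmetricFunctions _ _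

end Functions

/-- The nonresonance condition up to order `L`: no combination of at most `L` phases equals `K η`
with `K` positive and at most the number of phases. -/
def Nonresonant (η : ℝ) (φ : ℕ → ℝ) (L : ℕ) : Prop :=
  ∀ K J : ℕ, 1 ≤ K → K ≤ J → J ≤ L → ∀ m : Fin J → ℕ, K * η ≠ ∑ i, φ (m i)

/-- The generating series `H = ∑ h_J` of the functions `h_J` with `1 ≤ J ≤ L`. -/
noncomputable def hSeries (η : ℝ) (φ : ℕ → ℝ) (L : ℕ) : MvPowerSeries ℕ ℝ :=
  ∑ j ∈ Finset.range L, phaseForm φ (j + 1) (hFun (j + 1) η)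

section Riccati

open MvPowerSeries

variable {η : ℝ} {φ : ℕ → ℝ} {L : ℕ}

lemma Nonresonant.sub_weight_ne_zero (hres : Nonresonant η φ L) {n : ℕ →₀ ℕ} (hn : n.degree ≤ L)
    {K : ℕ} (hK : 1 ≤ K) (hKn : K ≤ n.degree) : K * η - Finsupp.weight φ n ≠ 0 := by
  obtain ⟨m, hm⟩ := exists_content_eq n
  rw [← hm, weight_content]
  exact sub_ne_zero.mpr (hres K n.degree hK hKn hn m)

lemma coeff_mul_letterSum_of_degree_eq_zero (f : MvPowerSeries ℕ ℝ) {n : ℕ →₀ ℕ}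
    (hn : n.degree = 0) : coeff n (f * letterSum ℕ ℝ) = 0 := by
  rw [coeff_mul_letterSum_congr (g := 0) fun m hm => absurd hm (by lia), zero_mul, map_zero]

lemma one_add_hSeries :
    1 + hSeries η φ L = ∑ j ∈ Finset.range (L + 1), phaseForm φ j (hFun j η) := by
  have phaseForm_hFun_zero : phaseForm φ 0 (hFun 0 η) = 1 := by
    rw [← phaseForm_zero_one φ]
    exact phaseForm_congr φ fun _ => by rw [hFun]
  rw [Finset.sum_range_succ', phaseForm_hFun_zero, add_comm, hSeries]

lemma coeff_hSeries {n : ℕ →₀ ℕ} (hn₀ : n ≠ 0) (hn : n.degree ≤ L) :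
    coeff n (hSeries η φ L) = coeff n (phaseForm φ n.degree (hFun n.degree η)) := by
  classical
  have coeff_one_add : coeff n (1 + hSeries η φ L) = coeff n (hSeries η φ L) := by
    rw [map_add, coeff_one, if_neg hn₀, zero_add]
  rw [← coeff_one_add, one_add_hSeries,
    coeff_sum_of_homogeneous fun j n hn => coeff_phaseForm_of_degree_ne φ _ hn,
    if_pos (Finset.mem_range_succ_iff.mpr hn)]

lemma constantCoeff_hSeries : constantCoeff (hSeries η φ L) = 0 := by
  rw [hSeries, map_sum]
  exact Finset.sum_eq_zero fun j _ => coeff_phaseForm_of_degree_ne φ _ (by simp)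

lemma phaseForm_concatMul_hFun {j J : ℕ} (hj : j ≤ J) :
    phaseForm φ (J + 1) (concatMul j (hFun j η) (hFun (J - j) η)) =
      phaseForm φ j (hFun j η) * phaseForm φ (J - j) (hFun (J - j) η) * letterSum ℕ ℝ := by
  obtain ⟨i, rfl⟩ := Nat.exists_eq_add_of_le hj
  rw [Nat.add_sub_cancel_left,
    phaseForm_succ φ (dependsOn_concatMul (dependsOn_hFun η j) (dependsOn_hFun η i)),
    phaseForm_concatMul φ (dependsOn_hFun η j)]

lemma sub_weight_mul_coeff_phaseForm_hFun {n : ℕ →₀ ℕ} {J : ℕ}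
    (hres : ∀ m : Fin (J + 1) → ℕ, η ≠ ∑ i, φ (m i)) :
    (η - Finsupp.weight φ n) * coeff n (phaseForm φ (J + 1) (hFun (J + 1) η)) =
      coeff n ((∑ j ∈ Finset.range (J + 1), phaseForm φ j (hFun j η) *
        phaseForm φ (J - j) (hFun (J - j) η)) * letterSum ℕ ℝ) := by
  have hFun_recursion : phaseForm φ (J + 1)
        (fun ψ => (η - ∑ i ∈ Finset.range (J + 1), ψ i) * hFun (J + 1) η ψ) =
      phaseForm φ (J + 1)
        (∑ j ∈ Finset.range (J + 1), concatMul j (hFun j η) (hFun (J - j) η)) :=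
    phaseForm_congr φ fun m => by
      rw [hFun_succ, sum_range_padFin, Finset.sum_apply,
        mul_inv_cancel_left₀ (sub_ne_zero.mpr (hres m))]
  rw [sub_weight_mul_coeff_phaseForm, hFun_recursion, map_sum, Finset.sum_mul,
    Finset.sum_congr rfl fun j hj => phaseForm_concatMul_hFun (Finset.mem_range_succ_iff.mp hj)]

lemma sub_weight_mul_coeff_hSeries (hres : Nonresonant η φ L) {n : ℕ →₀ ℕ}
    (hn : n.degree ≤ L) :
    (η - Finsupp.weight φ n) * coeff n (hSeries η φ L) =
      coeff n ((1 + hSeries η φ L) ^ 2 * letterSum ℕ ℝ) := by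
  rcases eq_or_ne n 0 with rfl | hn₀
  · rw [coeff_mul_letterSum_of_degree_eq_zero _ (map_zero _), coeff_zero_eq_constantCoeff_apply,
      constantCoeff_hSeries, mul_zero]
  obtain ⟨J, hJ⟩ := Nat.exists_eq_succ_of_ne_zero ((Finsupp.degree_eq_zero_iff n).not.mpr hn₀)
  rw [coeff_hSeries hn₀ hn, hJ, sub_weight_mul_coeff_phaseForm_hFun fun m => by
    simpa using hres 1 (J + 1) le_rfl (by lia) (by lia) m]
  refine coeff_mul_letterSum_congr fun m hm => ?_
  obtain rfl : m.degree = J := by lia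
  rw [one_add_hSeries,
    coeff_sum_range_sq (fun j n hn => coeff_phaseForm_of_degree_ne φ _ hn) (by lia)]

lemma sub_weight_mul_coeff_hSeries_pow (hres : Nonresonant η φ L) {n : ℕ →₀ ℕ}
    (hn : n.degree ≤ L) (k : ℕ) :
    ((k + 1 : ℕ) * η - Finsupp.weight φ n) * coeff n (hSeries η φ L ^ (k + 1)) =
      (k + 1 : ℕ) * coeff n (hSeries η φ L ^ k * ((1 + hSeries η φ L) ^ 2 * letterSum ℕ ℝ)) :=
  sub_weight_mul_coeff_pow
    (fun _ hm => sub_weight_mul_coeff_hSeries hres ((Finsupp.degree_mono hm).trans hn)) k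

lemma coeff_hSeries_pow_of_degree_lt {n : ℕ →₀ ℕ} {K : ℕ} (hK : n.degree < K) :
    coeff n (hSeries η φ L ^ K) = 0 :=
  coeff_of_lt_order <| (Nat.cast_lt.mpr hK).trans_le
    (le_order_pow_of_constantCoeff_eq_zero K constantCoeff_hSeries)

lemma sub_weight_mul_coeff_phaseForm_gAux {J : ℕ} {K : ℤ} {n : ℕ →₀ ℕ}
    (hres : ∀ m : Fin J → ℕ, K * η ≠ ∑ i, φ (m i)) :
    (K * η - Finsupp.weight φ n) * coeff n (phaseForm φ J (gAux J K η)) =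
      -2 * K * coeff n (phaseForm φ J (fAux J K η)) := by
  have clear_denominator :
      phaseForm φ J (fun ψ => (K * η - ∑ i ∈ Finset.range J, ψ i) * gAux J K η ψ) =
        phaseForm φ J ((-2 * K : ℝ) • fAux J K η) :=
    phaseForm_congr φ fun m => by
      rw [gAux, sum_range_padFin, ← mul_assoc, mul_div_cancel₀ _ (sub_ne_zero.mpr (hres m)),
        Pi.smul_apply, smul_eq_mul]
  rw [sub_weight_mul_coeff_phaseForm, clear_denominator, map_smul, coeff_smul]

lemma smul_phaseForm_fAux_add_two (hη : η ≠ 0) {J k : ℕ} (hk : k ≤ J + 1) :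
    η • phaseForm φ (J + 2) (fAux (J + 2) (k + 1 : ℕ) η) =
      ((1 / 2 : ℝ) • phaseForm φ (J + 1) (gAux (J + 1) k η)
        - phaseForm φ (J + 1) (gAux (J + 1) (k + 1 : ℕ) η)
        + (1 / 2 : ℝ) • phaseForm φ (J + 1) (gAux (J + 1) (k + 2 : ℕ) η)) * letterSum ℕ ℝ := by
  have phaseForm_symmetrize_gAux (K : ℤ) :
      phaseForm φ (J + 2) (symmetrize (J + 2) (gAux (J + 1) K η)) =
        phaseForm φ (J + 1) (gAux (J + 1) K η) * letterSum ℕ ℝ :=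
    (phaseForm_symmetrize φ _).trans (phaseForm_succ φ (dependsOn_gAux η (J + 1) K))
  have sum_omegaCoef_smul (f : ℤ → MvPowerSeries ℕ ℝ) :
      ∑ a ∈ ({-1, 0, 1} : Finset ℤ), omegaCoef a • f a =
        (1 / 2 : ℝ) • f (-1) - f 0 + (1 / 2 : ℝ) • f 1 := by
    have omegaCoef_neg_one : omegaCoef (-1) = 1 / 2 := by simp [omegaCoef]
    have omegaCoef_zero : omegaCoef 0 = -1 := by simp [omegaCoef]
    have omegaCoef_one : omegaCoef 1 = 1 / 2 := by simp [omegaCoef]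
    rw [Finset.sum_insert (by decide), Finset.sum_insert (by decide), Finset.sum_singleton,
      omegaCoef_neg_one, omegaCoef_zero, omegaCoef_one, neg_one_smul, ← add_assoc,
      ← sub_eq_add_neg]
  rw [fAux_add_two, if_pos (by lia), map_smul, smul_inv_smul₀ hη, map_sum]
  simp only [map_smul, phaseForm_symmetrize_gAux, sum_omegaCoef_smul, add_mul, sub_mul,
    smul_mul_assoc]
  push_cast
  ring_nf

lemma mul_coeff_phaseForm_fAux_one (hη : η ≠ 0) {n : ℕ →₀ ℕ} (hn : n.degree = 1) :
    η * coeff n (phaseForm φ 1 (fAux 1 1 η)) =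
      coeff n ((1 + hSeries η φ L) ^ 2 * letterSum ℕ ℝ) := by
  have fAux_one : fAux 1 1 η = η⁻¹ • fun _ => 1 := by
    ext ψ
    simp [fAux]
  rw [fAux_one, map_smul, coeff_smul, mul_inv_cancel_left₀ hη,
    phaseForm_succ φ ((dependsOn_const 1).mono (Set.empty_subset _)), phaseForm_zero_one]
  refine coeff_mul_letterSum_congr fun m hm => ?_
  rw [(Finsupp.degree_eq_zero_iff m).mp (by lia), coeff_zero_eq_constantCoeff_apply,
    coeff_zero_eq_constantCoeff_apply, map_pow, map_add, constantCoeff_hSeries, map_one, add_zero,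
    one_pow]

lemma pow_mul_coeff_phaseForm_fAux_add_two (hη : η ≠ 0) {J k : ℕ} (hk : k ≤ J + 1)
    (ih : ∀ m : ℕ →₀ ℕ, m.degree = J + 1 → ∀ K : ℕ,
      η ^ (J + 1) * coeff m (phaseForm φ (J + 1) (gAux (J + 1) K η)) =
        2 * (-1) ^ K * coeff m (hSeries η φ L ^ K))
    {n : ℕ →₀ ℕ} (hn : n.degree = J + 2) :
    η ^ (J + 2) * coeff n (phaseForm φ (J + 2) (fAux (J + 2) (k + 1 : ℕ) η)) =
      (-1) ^ k * coeff n (hSeries η φ L ^ k * ((1 + hSeries η φ L) ^ 2 * letterSum ℕ ℝ)) := by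
  rw [pow_succ, mul_assoc, ← coeff_smul, smul_phaseForm_fAux_add_two hη hk, ← coeff_smul,
    ← coeff_smul, ← smul_mul_assoc, ← mul_assoc, ← smul_mul_assoc]
  refine coeff_mul_letterSum_congr fun m hm => ?_
  have coeff_expand : coeff m (hSeries η φ L ^ k * (1 + hSeries η φ L) ^ 2) =
      coeff m (hSeries η φ L ^ k) + 2 * coeff m (hSeries η φ L ^ (k + 1)) +
        coeff m (hSeries η φ L ^ (k + 2)) := by
    rw [← coeff_C_mul, ← map_add, ← map_add]
    congr 1
    rw [map_ofNat]
    ring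
  have ih := ih m (by lia)
  rw [coeff_smul, coeff_smul, coeff_expand, map_add, map_sub, coeff_smul, coeff_smul]
  linear_combination (1 / 2) * ih k - ih (k + 1) + (1 / 2) * ih (k + 2)

lemma pow_mul_coeff_phaseForm_gAux_of_fAux (hres : Nonresonant η φ L) {n : ℕ →₀ ℕ} {J : ℕ}
    (hn : n.degree = J + 1) (hJ : J + 1 ≤ L)
    (h : ∀ k ≤ J, η ^ (J + 1) * coeff n (phaseForm φ (J + 1) (fAux (J + 1) (k + 1 : ℕ) η)) =
      (-1) ^ k * coeff n (hSeries η φ L ^ k * ((1 + hSeries η φ L) ^ 2 * letterSum ℕ ℝ)))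
    (K : ℕ) :
    η ^ (J + 1) * coeff n (phaseForm φ (J + 1) (gAux (J + 1) K η)) =
      2 * (-1) ^ K * coeff n (hSeries η φ L ^ K) := by
  classical
  rcases K with _ | k
  · have hn₀ : n ≠ 0 := (Finsupp.degree_eq_zero_iff n).not.mp (by lia)
    rw [Nat.cast_zero, gAux_zero_right, map_zero, map_zero, mul_zero, pow_zero, pow_zero,
      coeff_one, if_neg hn₀, mul_zero]
  rcases lt_or_ge J k with hk | hk
  · rw [gAux_eq_zero_of_lt η (by lia), map_zero, map_zero, mul_zero,
      coeff_hSeries_pow_of_degree_lt (by lia), mul_zero]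
  have gAux_eq := sub_weight_mul_coeff_phaseForm_gAux (K := (k + 1 : ℕ)) (n := n)
    fun m => by simpa using hres (k + 1) (J + 1) (by lia) (by lia) hJ m
  have pow_eq := sub_weight_mul_coeff_hSeries_pow hres (hn.trans_le hJ) k
  rw [Int.cast_natCast] at gAux_eq
  refine mul_left_cancel₀
    (hres.sub_weight_ne_zero (K := k + 1) (hn.trans_le hJ) (by lia) (by lia)) ?_
  linear_combination
    η ^ (J + 1) * gAux_eq - 2 * (k + 1 : ℕ) * h k hk - 2 * (-1) ^ (k + 1) * pow_eq

theorem pow_mul_coeff_phaseForm_gAux (hη : η ≠ 0) (hres : Nonresonant η φ L) {J : ℕ}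
    (hJ : J + 1 ≤ L) {n : ℕ →₀ ℕ} (hn : n.degree = J + 1) (K : ℕ) :
    η ^ (J + 1) * coeff n (phaseForm φ (J + 1) (gAux (J + 1) K η)) =
      2 * (-1) ^ K * coeff n (hSeries η φ L ^ K) := by
  induction J generalizing n K with
  | zero =>
    refine pow_mul_coeff_phaseForm_gAux_of_fAux hres hn hJ (fun k hk => ?_) K
    obtain rfl : k = 0 := Nat.le_zero.mp hk
    simpa using mul_coeff_phaseForm_fAux_one hη hn
  | succ J ih =>
    exact pow_mul_coeff_phaseForm_gAux_of_fAux hres hn hJ (fun k hk =>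
      pow_mul_coeff_phaseForm_fAux_add_two hη hk (fun m hm K => ih (by lia) hm K) hn) K

end Riccati

section Summability

open MvPowerSeries

variable {η : ℝ} {φ : ℕ → ℝ} {r : ℕ → ℝ} {L J : ℕ} {F : (ℕ → ℝ) → ℝ}

lemma phaseForm_mem_absSummable
    (hF : Summable fun m : Fin J → ℕ => ‖(∏ i, r (m i)) * F (padFin J φ m)‖) :
    phaseForm φ J F ∈ absSummable r :=
  wordForm_mem_absSummable hF

lemma summable_of_phaseForm_mem_absSummable (hsymm : F ∈ symmetricFunctions J)
    (hF : phaseForm φ J F ∈ absSummable r) :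
    Summable fun m : Fin J → ℕ => ‖(∏ i, r (m i)) * F (padFin J φ m)‖ :=
  summable_of_wordForm_mem_absSummable (u := fun m => F (padFin J φ m))
    (fun τ m => by rw [← permute_padFin, hsymm τ]) hF

lemma hSeries_mem_absSummable
    (h : ∀ j : ℕ, 1 ≤ j → j ≤ L →
      Summable fun m : Fin j → ℕ => ‖(∏ i, r (m i)) * hFun j η (padFin j φ m)‖) :
    hSeries η φ L ∈ absSummable r :=
  Subalgebra.sum_mem _ fun j hj =>
    phaseForm_mem_absSummable (h (j + 1) (by lia) (Finset.mem_range.mp hj))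

lemma phaseForm_gAux_mem_absSummable (hη : η ≠ 0) (hres : Nonresonant η φ L) (hJ : J + 1 ≤ L)
    (hH : hSeries η φ L ∈ absSummable r) (K : ℕ) :
    phaseForm φ (J + 1) (gAux (J + 1) K η) ∈ absSummable r := by
  have hHK : (2 * (-1) ^ K / η ^ (J + 1)) • hSeries η φ L ^ K ∈ absSummable r :=
    Subalgebra.smul_mem _ (pow_mem hH K) _
  refine mem_absSummable_of_coeff_eq hHK fun n hn => ?_
  have hn : n.degree = J + 1 := of_not_not fun h => hn (coeff_phaseForm_of_degree_ne φ _ h)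
  rw [coeff_smul, ← mul_right_inj' (pow_ne_zero (J + 1) hη),
    pow_mul_coeff_phaseForm_gAux hη hres hJ hn]
  field_simp

lemma summable_gAux (hη : η ≠ 0) (hres : Nonresonant η φ L) (hH : hSeries η φ L ∈ absSummable r)
    (hJ : J ≤ L) (K : ℕ) :
    Summable fun m : Fin J → ℕ => ‖(∏ i, r (m i)) * gAux J K η (padFin J φ m)‖ := by
  rcases J with _ | J
  · exact .of_finite
  · exact summable_of_phaseForm_mem_absSummable (gAux_mem_symmetricFunctions η (J + 1) K)
      (phaseForm_gAux_mem_absSummable hη hres hJ hH K)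

lemma summable_comp_neg {star : ℕ → ℕ} (hstar : Function.Injective star)
    (hr : ∀ k, r (star k) = r k) (hφ : ∀ k, φ (star k) = -φ k)
    (hF : Summable fun m : Fin J → ℕ => ‖(∏ i, r (m i)) * F (padFin J φ m)‖) :
    Summable fun m : Fin J → ℕ => ‖(∏ i, r (m i)) * F (-padFin J φ m)‖ := by
  have padFin_star (m : Fin J → ℕ) : padFin J φ (star ∘ m) = -padFin J φ m := by
    ext i
    by_cases h : i < J <;> simp [padFin, h, hφ]
  refine (hF.comp_injective hstar.comp_left).congr fun m => ?_
  simp only [Function.comp_apply, hr, ← padFin_star]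

lemma phaseForm_GFun (J : ℕ) :
    phaseForm φ J (GFun J η) =
      ∑ j ∈ Finset.Icc 1 (J - 1), ∑ k ∈ Finset.Icc 1 (min j (J - j)), (1 / (4 * (k : ℝ))) •
        (phaseForm φ j (gAux j k η) * phaseForm φ (J - j) fun ψ => gAux (J - j) k η (-ψ)) := by
  simp only [GFun_eq_sum_symmetrize, map_sum, map_smul, phaseForm_symmetrize]
  refine Finset.sum_congr rfl fun j hj => Finset.sum_congr rfl fun k _ => ?_
  rw [Finset.mem_Icc] at hj
  obtain ⟨i, rfl⟩ := Nat.exists_eq_add_of_le (show j ≤ J by lia)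
  rw [Nat.add_sub_cancel_left, phaseForm_concatMul φ (dependsOn_gAux η j k)]

lemma summable_GFun {star : ℕ → ℕ} (hstar : Function.Injective star)
    (hr : ∀ k, r (star k) = r k) (hφ : ∀ k, φ (star k) = -φ k)
    (hg : ∀ j k : ℕ, j < J →
      Summable fun m : Fin j → ℕ => ‖(∏ i, r (m i)) * gAux j k η (padFin j φ m)‖) :
    Summable fun m : Fin J → ℕ => ‖(∏ i, r (m i)) * GFun J η (padFin J φ m)‖ := by
  refine summable_of_phaseForm_mem_absSummable (GFun_mem_symmetricFunctions η J) ?_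
  rw [phaseForm_GFun]
  refine Subalgebra.sum_mem _ fun j hj => Subalgebra.sum_mem _ fun k _ =>
    Subalgebra.smul_mem _ (Subalgebra.mul_mem _ ?_ ?_) _ <;> rw [Finset.mem_Icc] at hj
  · exact phaseForm_mem_absSummable (hg j k (by lia))
  · exact phaseForm_mem_absSummable
      (summable_comp_neg hstar hr hφ (hg (J - j) k (by lia)))

end Summability

theorem stmt9_general {𝕜 : Type*} [NormedField 𝕜] (L : ℕ) (η : ℝ) (hη : η ≠ 0)
    (c : ℕ → 𝕜) (φ : ℕ → ℝ)
    (hsd : ∀ j : ℕ, 1 ≤ j → j ≤ L →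
      Summable fun m : Fin j → ℕ => ‖∏ i, c (m i)‖ * |hFun j η (padFin j φ m)|)
    (hres : Nonresonant η φ L) :
    (∀ J K : ℕ, J ≤ L →
      Summable fun m : Fin J → ℕ => ‖∏ i, c (m i)‖ * |gAux J K η (padFin J φ m)|) ∧
    (∀ star : ℕ → ℕ, Function.Injective star → (∀ k, ‖c (star k)‖ = ‖c k‖) →
      (∀ k, φ (star k) = -φ k) → ∀ J ≤ L + 1,
        Summable fun m : Fin J → ℕ => ‖∏ i, c (m i)‖ * |GFun J η (padFin J φ m)|) := by
  have norm_eq {J : ℕ} (m : Fin J → ℕ) (x : ℝ) :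
      ‖∏ i, c (m i)‖ * |x| = ‖(∏ i, ‖c (m i)‖) * x‖ := by
    rw [norm_mul, ← norm_prod, norm_norm, Real.norm_eq_abs]
  have hH : hSeries η φ L ∈ absSummable fun k => ‖c k‖ :=
    hSeries_mem_absSummable fun j hj hjL => (hsd j hj hjL).congr fun m => norm_eq m _
  have summable_g (J K : ℕ) (hJ : J ≤ L) :
      Summable fun m : Fin J → ℕ => ‖(∏ i, ‖c (m i)‖) * gAux J K η (padFin J φ m)‖ :=
    summable_gAux hη hres hH hJ K
  refine ⟨fun J K hJ => (summable_g J K hJ).congr fun m => (norm_eq m _).symm,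
    fun star hstar hc hφ J hJ => ?_⟩
  have summable_G : Summable fun m : Fin J → ℕ => ‖(∏ i, ‖c (m i)‖) * GFun J η (padFin J φ m)‖ :=
    summable_GFun (r := fun k => ‖c k‖) hstar hc hφ fun j k hj => summable_g j k (by lia)
  exact summable_G.congr fun m => (norm_eq m _).symm

theorem stmt9 (p : ℕ) (hp : 2 ≤ p) (η : ℝ) (hη : 0 < η)
    (c : ℕ → ℂ) (φ : ℕ → ℝ)
    (hc : Summable fun k => ‖c k‖)
    (hsd : ∀ j : ℕ, 1 ≤ j → j ≤ p - 1 →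
      Summable fun m : Fin j → ℕ => ‖∏ i, c (m i)‖ * |hFun j η (padFin j φ m)|)
    (hres : ∀ K J : ℕ, 1 ≤ K → K ≤ J → J ≤ p → ∀ (m : Fin J → ℕ) (ε : Fin J → ℝ),
      (∀ i, ε i = 1 ∨ ε i = -1) → (K : ℝ) * η ≠ ∑ i, ε i * φ (m i))
    (hinv : ∃ star : ℕ → ℕ, Function.Involutive star ∧
      (∀ k, c (star k) = starRingEnd ℂ (c k)) ∧ (∀ k, φ (star k) = -φ k)) :
    (∀ J K : ℕ, 1 ≤ K → K ≤ J → J ≤ p - 1 →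
      Summable fun m : Fin J → ℕ =>
        ‖∏ i, c (m i)‖ * |gAux J (K : ℤ) η (padFin J φ m)|) ∧
    (∀ J : ℕ, 2 ≤ J → J ≤ p →
      Summable fun m : Fin J → ℕ =>
        ‖∏ i, c (m i)‖ * |GFun J η (padFin J φ m)|) := by
  obtain ⟨star, hstar, hcstar, hφstar⟩ := hinv
  obtain ⟨hg, hG⟩ := stmt9_general (p - 1) η hη.ne' c φ hsd fun K J hK hKJ hJ m => by
    simpa using hres K J hK hKJ (by lia) m (fun _ => 1) fun _ => .inl rfl
  exact ⟨fun J K _ _ hJ => hg J K hJ, fun J _ hJ =>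
    hG star hstar.injective (fun k => by rw [hcstar, RCLike.norm_conj]) hφstar J (by lia)⟩
end
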